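/- Let 𝚫 ∈ 𝒜. Then there exists a gentle quiver 𝚫' without branch relations which is reflection-equivalent to 𝚫 (i.e. obtained from 𝚫 by a finite sequence of reflections and coreflections). -/

import Mathlib

/-! Common formalization infrastructure for gentle quivers (Bobinski–Buan,
    "Derived equivalence classification of gentle cluster tilted algebras"). -/

/-- A (finite) quiver with (length-two, monomial) relations.  Vertices and
arrows are natural numbers; `V` and `A` are the finite sets of vertices and
arrows, `src`/`tgt` give the start and terminus of each arrow, and `rel` is the
set of relations, a relation `(a, b)` standing for the length-two path
`a·b` (so `src a = tgt b`). -/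
structure QuivRel where
  V : Finset ℕ
  A : Finset ℕ
  src : ℕ → ℕ
  tgt : ℕ → ℕ
  rel : Finset (ℕ × ℕ)

namespace GentleQuiv

/-- Two vertices are adjacent if some arrow joins them (in either direction). -/
def Adj (Q : QuivRel) (x y : ℕ) : Prop :=
  ∃ a ∈ Q.A, (Q.src a = x ∧ Q.tgt a = y) ∨ (Q.src a = y ∧ Q.tgt a = x)

/-- A quiver is connected if any two of its vertices are joined by a walk. -/
def Connected (Q : QuivRel) : Prop :=
  ∀ x ∈ Q.V, ∀ y ∈ Q.V, Relation.ReflTransGen (Adj Q) x y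

/-- `l = [α₁, …, αₙ]` is a (nonempty) path in the quiver: consecutive arrows
compose, i.e. `s αᵢ = t αᵢ₊₁`. -/
def IsPathList (Q : QuivRel) (l : List ℕ) : Prop :=
  l ≠ [] ∧ (∀ a ∈ l, a ∈ Q.A) ∧ l.Chain' (fun a b => Q.src a = Q.tgt b)

/-- The path `l` contains a subpath (two consecutive arrows) lying in `R`. -/
def HasRelSubpath (Q : QuivRel) (l : List ℕ) : Prop :=
  ∃ a b, (a, b) ∈ Q.rel ∧ [a, b] <:+: l

/-- Gentle quiver: connected, relations are composable pairs of arrows, at most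
two arrows in/out of every vertex, the usual gentleness conditions on
relations, and a global bound forcing finite dimensionality. -/
def IsGentle (Q : QuivRel) : Prop :=
  Q.V.Nonempty ∧
  (∀ a ∈ Q.A, Q.src a ∈ Q.V ∧ Q.tgt a ∈ Q.V) ∧
  Connected Q ∧
  (∀ ρ ∈ Q.rel, ρ.1 ∈ Q.A ∧ ρ.2 ∈ Q.A ∧ Q.src ρ.1 = Q.tgt ρ.2) ∧
  (∀ x, (Q.A.filter fun a => Q.src a = x).card ≤ 2) ∧
  (∀ x, (Q.A.filter fun a => Q.tgt a = x).card ≤ 2) ∧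
  (∀ a ∈ Q.A, (Q.A.filter fun b => Q.src b = Q.tgt a ∧ (b, a) ∉ Q.rel).card ≤ 1) ∧
  (∀ a ∈ Q.A, (Q.A.filter fun c => Q.tgt c = Q.src a ∧ (a, c) ∉ Q.rel).card ≤ 1) ∧
  (∀ a ∈ Q.A, (Q.A.filter fun b => (b, a) ∈ Q.rel).card ≤ 1) ∧
  (∀ a ∈ Q.A, (Q.A.filter fun c => (a, c) ∈ Q.rel).card ≤ 1) ∧
  (∃ n : ℕ, ∀ l : List ℕ, IsPathList Q l → l.length = n → HasRelSubpath Q l)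

/-- A choice of functions `σ, τ : Δ₁ → {±1}` as in Avella-Alaminos–Geiss. -/
structure SigmaTau (Q : QuivRel) where
  σ : ℕ → ℤ
  τ : ℕ → ℤ
  σ_pm : ∀ a ∈ Q.A, σ a = 1 ∨ σ a = -1
  τ_pm : ∀ a ∈ Q.A, τ a = 1 ∨ τ a = -1
  σ_src : ∀ a ∈ Q.A, ∀ b ∈ Q.A, a ≠ b → Q.src a = Q.src b → σ a = -σ b
  τ_tgt : ∀ a ∈ Q.A, ∀ b ∈ Q.A, a ≠ b → Q.tgt a = Q.tgt b → τ a = -τ b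
  rel_iff : ∀ a ∈ Q.A, ∀ b ∈ Q.A, Q.src a = Q.tgt b → ((a, b) ∈ Q.rel ↔ σ a = τ b)

/-- A thread: either a trivial path/antipath `1_{x,ε}` at a vertex `x` with a
sign `ε`, or a sequence of arrows of positive length. -/
inductive Thread where
  | triv (x : ℕ) (ε : ℤ) : Thread
  | arrows (l : List ℕ) : Thread
deriving DecidableEq

/-- Source of a thread. -/
def Thread.source (Q : QuivRel) : Thread → ℕ
  | .triv x _ => x
  | .arrows l => Q.src l.getLast!

/-- Target of a thread. -/
def Thread.target (Q : QuivRel) : Thread → ℕ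
  | .triv x _ => x
  | .arrows l => Q.tgt l.head!

/-- `σω` (for paths and antipaths alike; `σ 1_{x,ε} = ε = σ 1'_{x,ε}`). -/
def Thread.sigma {Q : QuivRel} (st : SigmaTau Q) : Thread → ℤ
  | .triv _ ε => ε
  | .arrows l => st.σ l.getLast!

/-- `τω` when `ω` is regarded as a path (`τ 1_{x,ε} = -ε`). -/
def Thread.tauPath {Q : QuivRel} (st : SigmaTau Q) : Thread → ℤ
  | .triv _ ε => -ε
  | .arrows l => st.τ l.head!

/-- `τω` when `ω` is regarded as an antipath (`τ 1'_{x,ε} = ε`). -/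
def Thread.tauAnti {Q : QuivRel} (st : SigmaTau Q) : Thread → ℤ
  | .triv _ ε => ε
  | .arrows l => st.τ l.head!

/-- Length of a thread. -/
def Thread.len : Thread → ℕ
  | .triv _ _ => 0
  | .arrows l => l.length

/-- A path in `𝚫` of positive length (no two consecutive arrows in `R`). -/
def IsPermList (Q : QuivRel) (l : List ℕ) : Prop :=
  IsPathList Q l ∧ l.Chain' (fun a b => (a, b) ∉ Q.rel)

/-- An antipath in `𝚫` of positive length (all consecutive pairs in `R`). -/
def IsAntiList (Q : QuivRel) (l : List ℕ) : Prop :=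
  l ≠ [] ∧ (∀ a ∈ l, a ∈ Q.A) ∧ l.Chain' (fun a b => (a, b) ∈ Q.rel)

/-- A thread is a path in `𝚫` (including trivial ones). -/
def IsPathThread (Q : QuivRel) : Thread → Prop
  | .triv x ε => x ∈ Q.V ∧ (ε = 1 ∨ ε = -1)
  | .arrows l => IsPermList Q l

/-- A thread is an antipath in `𝚫` (including trivial ones). -/
def IsAntiThread (Q : QuivRel) : Thread → Prop
  | .triv x ε => x ∈ Q.V ∧ (ε = 1 ∨ ε = -1)
  | .arrows l => IsAntiList Q l

/-- `w ∈ ℳ`: `w` is a maximal path of `𝚫`. -/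
def InM (Q : QuivRel) (st : SigmaTau Q) (w : Thread) : Prop :=
  IsPathThread Q w ∧
  (¬ ∃ a ∈ Q.A, Q.src a = w.target Q ∧ st.σ a = -(w.tauPath st)) ∧
  (¬ ∃ b ∈ Q.A, Q.tgt b = w.source Q ∧ st.τ b = -(w.sigma st))

/-- `w ∈ 𝒩`: `w` is a maximal antipath of `𝚫`. -/
def InN (Q : QuivRel) (st : SigmaTau Q) (w : Thread) : Prop :=
  IsAntiThread Q w ∧
  (¬ ∃ a ∈ Q.A, Q.src a = w.target Q ∧ st.σ a = w.tauAnti st) ∧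
  (¬ ∃ b ∈ Q.A, Q.tgt b = w.source Q ∧ st.τ b = w.sigma st)

/-- The graph of the bijection `Φ = φ ∘ ψ : 𝒩 → 𝒩`:  `PhiRel Q st w w'` holds
iff `w, w' ∈ 𝒩` and the maximal path `ψ w` (with `s(ψw) = sw`, `σ(ψw) = -σw`)
satisfies `t w' = t (ψ w)` and `τ w' = -τ(ψ w)`, i.e. `w' = φ (ψ w) = Φ w`. -/
def PhiRel (Q : QuivRel) (st : SigmaTau Q) (w w' : Thread) : Prop :=
  InN Q st w ∧ InN Q st w' ∧
  ∃ m : Thread, InM Q st m ∧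
    m.source Q = w.source Q ∧ m.sigma st = -(w.sigma st) ∧
    w'.target Q = m.target Q ∧ w'.tauAnti st = -(m.tauPath st)

/-- `O` is an orbit of the `ℤ`-action on `𝒩` induced by `Φ`. -/
def NOrbit (Q : QuivRel) (st : SigmaTau Q) (O : Set Thread) : Prop :=
  ∃ w, InN Q st w ∧ O = {w' | Relation.EqvGen (PhiRel Q st) w w'}

/-- `p(𝒪) = |𝒪|` for an orbit `𝒪 ∈ 𝒩/ℤ`. -/
noncomputable def pN (O : Set Thread) : ℕ := O.ncard

/-- `q(𝒪) = Σ_{ω ∈ 𝒪} ℓ(ω)` for an orbit `𝒪 ∈ 𝒩/ℤ`. -/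
noncomputable def qN (O : Set Thread) : ℕ := ∑ᶠ w ∈ O, Thread.len w

/-- `a ∈ 𝒞`: the arrow `a` occurs in no maximal antipath. -/
def InC (Q : QuivRel) (st : SigmaTau Q) (a : ℕ) : Prop :=
  a ∈ Q.A ∧ ¬ ∃ l : List ℕ, InN Q st (.arrows l) ∧ a ∈ l

/-- The graph of the bijection `Ψ : 𝒞 → 𝒞`. -/
def PsiRel (Q : QuivRel) (st : SigmaTau Q) (a b : ℕ) : Prop :=
  InC Q st a ∧ InC Q st b ∧ Q.tgt b = Q.src a ∧ st.τ b = st.σ a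

/-- `O` is an orbit of the `ℤ`-action on `𝒞` induced by `Ψ`. -/
def COrbit (Q : QuivRel) (st : SigmaTau Q) (O : Set ℕ) : Prop :=
  ∃ a, InC Q st a ∧ O = {b | Relation.EqvGen (PsiRel Q st) a b}

/-- The Avella-Alaminos–Geiss invariant `f_𝚫 : ℕ² → ℕ`:  `f_𝚫 (p,q)` counts the
orbits `𝒪 ∈ 𝒩/ℤ ⊔ 𝒞/ℤ` with `p(𝒪) = p` and `q(𝒪) = q`. -/
noncomputable def fInv (Q : QuivRel) (st : SigmaTau Q) : ℕ × ℕ → ℕ := fun pq =>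
  {O : Set Thread | NOrbit Q st O ∧ pN O = pq.1 ∧ qN O = pq.2}.ncard +
  {O : Set ℕ | COrbit Q st O ∧ pq.1 = 0 ∧ O.ncard = pq.2}.ncard

/-- `[p, q] : ℕ² → ℕ`, the characteristic function of `{(p, q)}`. -/
def charFn (p q : ℕ) : ℕ × ℕ → ℕ := fun pq => if pq = (p, q) then 1 else 0

/-- Tree type: `|Δ₀| = |Δ₁| + 1`. -/
def TreeType (Q : QuivRel) : Prop := Q.V.card = Q.A.card + 1

/-- Removing a set of arrows (keeping all vertices); relations containing a
removed arrow are discarded. -/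
def deleteArrows (Q : QuivRel) (S : Finset ℕ) : QuivRel where
  V := Q.V
  A := Q.A \ S
  src := Q.src
  tgt := Q.tgt
  rel := Q.rel.filter fun ρ => ρ.1 ∉ S ∧ ρ.2 ∉ S

/-- Branch arrow: removing it disconnects the quiver. -/
def BranchArrow (Q : QuivRel) (a : ℕ) : Prop :=
  a ∈ Q.A ∧ ¬ Connected (deleteArrows Q {a})

/-- Cycle arrow: removing it leaves the quiver connected. -/
def CycleArrow (Q : QuivRel) (a : ℕ) : Prop :=
  a ∈ Q.A ∧ Connected (deleteArrows Q {a})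

/-- Branch relation: a relation one of whose arrows is a branch arrow. -/
def BranchRel (Q : QuivRel) (ρ : ℕ × ℕ) : Prop :=
  ρ ∈ Q.rel ∧ (BranchArrow Q ρ.1 ∨ BranchArrow Q ρ.2)

/-- A relation `ρ = (α, β)` is isolated if the antipath `(α, β)` is a maximal
antipath, i.e. `ρ ∈ 𝒩`. -/
def Isolated (Q : QuivRel) (st : SigmaTau Q) (ρ : ℕ × ℕ) : Prop :=
  ρ ∈ Q.rel ∧ InN Q st (.arrows [ρ.1, ρ.2])

/-- `Q'` is obtained from `Q` by completing the relations from `R₀`, the new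
arrow attached to `ρ ∈ R₀` being `γ ρ`. -/
structure IsCompletion (Q : QuivRel) (R0 : Finset (ℕ × ℕ)) (γ : ℕ × ℕ → ℕ)
    (Q' : QuivRel) : Prop where
  subset : R0 ⊆ Q.rel
  fresh : ∀ ρ ∈ R0, γ ρ ∉ Q.A
  inj : ∀ ρ ∈ R0, ∀ ρ' ∈ R0, γ ρ = γ ρ' → ρ = ρ'
  V_eq : Q'.V = Q.V
  A_eq : Q'.A = Q.A ∪ R0.image γ
  src_old : ∀ a ∈ Q.A, Q'.src a = Q.src a
  tgt_old : ∀ a ∈ Q.A, Q'.tgt a = Q.tgt a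
  src_new : ∀ ρ ∈ R0, Q'.src (γ ρ) = Q.tgt ρ.1
  tgt_new : ∀ ρ ∈ R0, Q'.tgt (γ ρ) = Q.src ρ.2
  rel_eq : Q'.rel = Q.rel ∪ R0.image (fun ρ => (γ ρ, ρ.1)) ∪
      R0.image (fun ρ => (ρ.2, γ ρ))

/-- A 3-cycle: three pairwise distinct arrows forming an oriented cycle. -/
def Is3Cycle (Q : QuivRel) (a0 a1 a2 : ℕ) : Prop :=
  a0 ∈ Q.A ∧ a1 ∈ Q.A ∧ a2 ∈ Q.A ∧ a0 ≠ a1 ∧ a1 ≠ a2 ∧ a0 ≠ a2 ∧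
  Q.src a0 = Q.tgt a1 ∧ Q.src a1 = Q.tgt a2 ∧ Q.src a2 = Q.tgt a0

/-- A triangle: a 3-cycle all of whose three compositions are relations. -/
def IsTriangleTriple (Q : QuivRel) (a0 a1 a2 : ℕ) : Prop :=
  Is3Cycle Q a0 a1 a2 ∧ (a0, a1) ∈ Q.rel ∧ (a1, a2) ∈ Q.rel ∧ (a2, a0) ∈ Q.rel

/-- The (unordered) set of arrows of a triangle. -/
def TriangleSet (Q : QuivRel) (O : Finset ℕ) : Prop :=
  ∃ a0 a1 a2, O = {a0, a1, a2} ∧ IsTriangleTriple Q a0 a1 a2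

/-- Branch triangle: removing any two of its arrows disconnects the quiver. -/
def BranchTriangle (Q : QuivRel) (O : Finset ℕ) : Prop :=
  TriangleSet Q O ∧ ∀ S ⊆ O, S.card = 2 → ¬ Connected (deleteArrows Q S)

/-- Free relation: a relation neither of whose arrows lies in `𝒞`. -/
def FreeRel (Q : QuivRel) (st : SigmaTau Q) (ρ : ℕ × ℕ) : Prop :=
  ρ ∈ Q.rel ∧ ¬ InC Q st ρ.1 ∧ ¬ InC Q st ρ.2

/-- The class `𝒜`: gentle quivers with `f_𝚫 = m·[0,3] + [p+m+2, p]`. -/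
def ClassA (Q : QuivRel) (st : SigmaTau Q) : Prop :=
  IsGentle Q ∧ ∃ m p : ℕ, ∀ x, fInv Q st x = m * charFn 0 3 x + charFn (p + m + 2) p x

/-- The class `Ã`: gentle quivers with
`f_𝚫 = (m₁+m₂)·[0,3] + [p+m₁, p] + [q+m₂, q]`, `p+m₁ > 0`, `q+m₂ > 0`. -/
def ClassAtilde (Q : QuivRel) (st : SigmaTau Q) : Prop :=
  IsGentle Q ∧ ∃ m1 m2 p q : ℕ, 0 < p + m1 ∧ 0 < q + m2 ∧
    ∀ x, fInv Q st x =
      (m1 + m2) * charFn 0 3 x + charFn (p + m1) p x + charFn (q + m2) q x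

/-- Isomorphism of quivers with relations. -/
def IsoQR (Q Q' : QuivRel) : Prop :=
  ∃ fV fA : ℕ → ℕ,
    Set.BijOn fV ↑Q.V ↑Q'.V ∧ Set.BijOn fA ↑Q.A ↑Q'.A ∧
    (∀ a ∈ Q.A, Q'.src (fA a) = fV (Q.src a) ∧ Q'.tgt (fA a) = fV (Q.tgt a)) ∧
    (∀ a ∈ Q.A, ∀ b ∈ Q.A, ((a, b) ∈ Q.rel ↔ (fA a, fA b) ∈ Q'.rel))

/-- The quiver has no loops. -/
def NoLoops (Q : QuivRel) : Prop := ∀ a ∈ Q.A, Q.src a ≠ Q.tgt a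

/-- The reflection at `x` is defined: every arrow starting at `x` admits a
(necessarily unique) companion arrow ending at `x` not bound by a relation. -/
def CanReflect (Q : QuivRel) (x : ℕ) : Prop :=
  x ∈ Q.V ∧ ∀ a ∈ Q.A, Q.src a = x → ∃ b ∈ Q.A, Q.tgt b = x ∧ (a, b) ∉ Q.rel

/-- `Q'` is the reflection of the gentle loop-free quiver `Q` at the vertex
`x`, following Brenner–Butler tilting. -/
def IsReflection (Q : QuivRel) (x : ℕ) (Q' : QuivRel) : Prop :=
  IsGentle Q ∧ NoLoops Q ∧ CanReflect Q x ∧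
  Q'.V = Q.V ∧ Q'.A = Q.A ∧
  (∀ a ∈ Q.A, Q.tgt a = x → Q'.src a = x ∧ Q'.tgt a = Q.src a) ∧
  (∀ a ∈ Q.A, Q.src a = x →
    ∀ b ∈ Q.A, Q.tgt b = x → (a, b) ∉ Q.rel → Q'.src a = Q.src b) ∧
  (∀ a ∈ Q.A, Q.tgt a ≠ x → Q.src a ≠ x → Q'.src a = Q.src a) ∧
  (∀ a ∈ Q.A, Q.tgt a ≠ x →
    ((∃ b ∈ Q.A, Q.tgt b = x ∧ Q.src b = Q.tgt a ∧ (b, a) ∈ Q.rel) → Q'.tgt a = x) ∧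
    ((¬ ∃ b ∈ Q.A, Q.tgt b = x ∧ Q.src b = Q.tgt a ∧ (b, a) ∈ Q.rel) →
      Q'.tgt a = Q.tgt a)) ∧
  (∀ a b : ℕ, (a, b) ∈ Q'.rel ↔
    (((a, b) ∈ Q.rel ∧ Q.tgt a ≠ x ∧ Q.src a ≠ x) ∨
     (a ∈ Q.A ∧ b ∈ Q.A ∧ Q.src a = x ∧ Q.tgt b = x ∧ (a, b) ∉ Q.rel) ∨
     (a ∈ Q.A ∧ b ∈ Q.A ∧ Q.tgt a = x ∧
       ∃ c ∈ Q.A, c ≠ a ∧ Q.tgt c = x ∧ Q.src c = Q.tgt b ∧ (c, b) ∈ Q.rel)))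

/-- The opposite quiver with relations. -/
def opQR (Q : QuivRel) : QuivRel where
  V := Q.V
  A := Q.A
  src := Q.tgt
  tgt := Q.src
  rel := Q.rel.image fun ρ => (ρ.2, ρ.1)

/-- Coreflection: the dual of reflection. -/
def IsCoreflection (Q : QuivRel) (x : ℕ) (Q' : QuivRel) : Prop :=
  IsReflection (opQR Q) x (opQR Q')

/-- One step of reflection equivalence: a reflection, a coreflection, or an
isomorphism of quivers with relations. -/
def RefStep (Q Q' : QuivRel) : Prop :=
  (∃ x, IsReflection Q x Q') ∨ (∃ x, IsCoreflection Q x Q') ∨ IsoQR Q Q'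

/-- Reflection equivalence: a finite sequence of reflections/coreflections,
up to isomorphism of quivers with relations. -/
def RefEquiv : QuivRel → QuivRel → Prop := Relation.ReflTransGen RefStep

/-- A cyclic orientation of a `1`-cycle quiver without branch arrows (i.e. a
cycle): enumerations of the vertices and arrows by `ZMod n` such that the
`i`-th arrow joins the `i`-th and `(i+1)`-st vertices. -/
structure CyclicOrientation (Q : QuivRel) (n : ℕ) where
  ev : ZMod n → ℕ
  ea : ZMod n → ℕ
  ev_mem : ∀ i, ev i ∈ Q.V
  ea_mem : ∀ i, ea i ∈ Q.A
  ev_inj : Function.Injective ev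
  ea_inj : Function.Injective ea
  ev_surj : ∀ v ∈ Q.V, ∃ i, ev i = v
  ea_surj : ∀ a ∈ Q.A, ∃ i, ea i = a
  compat : ∀ i : ZMod n,
    (Q.src (ea i) = ev i ∧ Q.tgt (ea i) = ev (i + 1)) ∨
    (Q.src (ea i) = ev (i + 1) ∧ Q.tgt (ea i) = ev i)

/-- Clockwise arrow with respect to a cyclic orientation. -/
def Clockwise (Q : QuivRel) {n : ℕ} (co : CyclicOrientation Q n) (a : ℕ) : Prop :=
  a ∈ Q.A ∧ ∃ i : ZMod n, co.ea i = a ∧ Q.src a = co.ev i ∧ Q.tgt a = co.ev (i + 1)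

/-- Anticlockwise arrow with respect to a cyclic orientation. -/
def Anticlockwise (Q : QuivRel) {n : ℕ} (co : CyclicOrientation Q n) (a : ℕ) : Prop :=
  a ∈ Q.A ∧ ∃ i : ZMod n, co.ea i = a ∧ Q.src a = co.ev (i + 1) ∧ Q.tgt a = co.ev i

end GentleQuiv

namespace GentleQuiv


/-- A triangle, expressed by relations only. -/
def Tri (Q : QuivRel) (a b c : ℕ) : Prop :=
  a ≠ b ∧ b ≠ c ∧ a ≠ c ∧ (a, b) ∈ Q.rel ∧ (b, c) ∈ Q.rel ∧ (c, a) ∈ Q.rel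

/-- The working class: half-vertex data `s`, `t`, and the cohomological conditions. -/
structure Good (Q : QuivRel) (s t : ℕ → Bool) : Prop where
  ne : Q.V.Nonempty
  mem : ∀ a ∈ Q.A, Q.src a ∈ Q.V ∧ Q.tgt a ∈ Q.V
  conn : ∀ X : ℕ → Prop, (∀ a ∈ Q.A, (X (Q.src a) ↔ X (Q.tgt a))) →
    ∀ x ∈ Q.V, ∀ y ∈ Q.V, X x → X y
  rel : ∀ a b, (a, b) ∈ Q.rel ↔ a ∈ Q.A ∧ b ∈ Q.A ∧ Q.src a = Q.tgt b ∧ s a = t b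
  si : ∀ a ∈ Q.A, ∀ b ∈ Q.A, Q.src a = Q.src b → s a = s b → a = b
  ti : ∀ a ∈ Q.A, ∀ b ∈ Q.A, Q.tgt a = Q.tgt b → t a = t b → a = b
  rank : ∃ r : ℕ → ℕ, ∀ a ∈ Q.A, ∀ b ∈ Q.A, Q.src a = Q.tgt b → s a ≠ t b → r b < r a
  h1 : ∀ g : ℕ → ZMod 2, (∀ a b c, Tri Q a b c → g a + g b + g c = 0) →
    ∃ f : ℕ → ZMod 2, ∀ a ∈ Q.A, f (Q.src a) + f (Q.tgt a) = g a

theorem Tri.rot {Q : QuivRel} {a b c : ℕ} (h : Tri Q a b c) : Tri Q b c a := by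
  unfold Tri at *; tauto

theorem connected_iff (Q : QuivRel) (hm : ∀ a ∈ Q.A, Q.src a ∈ Q.V ∧ Q.tgt a ∈ Q.V) :
    Connected Q ↔ ∀ X : ℕ → Prop, (∀ a ∈ Q.A, (X (Q.src a) ↔ X (Q.tgt a))) →
    ∀ x ∈ Q.V, ∀ y ∈ Q.V, X x → X y := by
  constructor
  · intro h X hX x hx y hy hxx
    have := h x hx y hy
    induction this with
    | refl => exact hxx
    | @tail u v hu huv ih =>
      obtain ⟨a, ha, h1 | h1⟩ := huv
      · have hu' : u ∈ Q.V := h1.1 ▸ (hm a ha).1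
        have := ih hu'
        rw [← h1.2]; rw [← h1.1] at this; exact (hX a ha).1 this
      · have hu' : u ∈ Q.V := h1.2 ▸ (hm a ha).2
        have := ih hu'
        rw [← h1.1]; rw [← h1.2] at this; exact (hX a ha).2 this
  · intro h x hx y hy
    refine h (fun v => Relation.ReflTransGen (Adj Q) x v) ?_ x hx y hy .refl
    intro a ha
    constructor
    · intro h'; exact h'.tail ⟨a, ha, Or.inl ⟨rfl, rfl⟩⟩
    · intro h'; exact h'.tail ⟨a, ha, Or.inr ⟨rfl, rfl⟩⟩

theorem card_le_two_of (A : Finset ℕ) (p : ℕ → Prop) [DecidablePred p] (s : ℕ → Bool)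
    (h : ∀ a ∈ A, ∀ b ∈ A, p a → p b → s a = s b → a = b) : (A.filter p).card ≤ 2 := by
  have : ((A.filter p).image s).card = (A.filter p).card := by
    apply Finset.card_image_of_injOn
    intro a ha b hb hab
    simp at ha hb
    exact h a ha.1 b hb.1 ha.2 hb.2 hab
  rw [← this]
  exact (Finset.card_le_univ _).trans (by simp)

theorem card_le_one_of (A : Finset ℕ) (p : ℕ → Prop) [DecidablePred p]
    (h : ∀ a ∈ A, ∀ b ∈ A, p a → p b → a = b) : (A.filter p).card ≤ 1 := by
  rw [Finset.card_le_one]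
  intro a ha b hb
  simp at ha hb
  exact h a ha.1 b hb.1 ha.2 hb.2

theorem chain_len (r : ℕ → ℕ) : ∀ (l : List ℕ) (a : ℕ),
    List.IsChain (fun a b => r b < r a) (a :: l) → l.length ≤ r a := by
  intro l
  induction l with
  | nil => intro a _; simp
  | cons b l ih =>
    intro a h
    rw [List.isChain_cons_cons] at h
    have := ih b h.2
    simp; omega

theorem chain_of_noRel (Q : QuivRel) : ∀ l : List ℕ, ¬ HasRelSubpath Q l →
    List.IsChain (fun a b => (a, b) ∉ Q.rel) l := by
  intro l
  induction l with
  | nil => intro _; exact List.isChain_nil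
  | cons a l ih =>
    intro h
    cases l with
    | nil => exact List.isChain_singleton _
    | cons b l =>
      rw [List.isChain_cons_cons]
      refine ⟨fun hab => h ⟨a, b, hab, ⟨[], l, by simp⟩⟩, ih ?_⟩
      rintro ⟨c, d, hcd, u, v, huv⟩
      exact h ⟨c, d, hcd, a :: u, v, by simp [← huv]⟩

theorem bool3 : ∀ x y z : Bool, x ≠ z → y ≠ z → x = y := by decide

theorem Good.gentle {Q : QuivRel} {s t : ℕ → Bool} (h : Good Q s t) : IsGentle Q := by
  refine ⟨h.ne, h.mem, (connected_iff Q h.mem).2 h.conn, ?_, ?_, ?_, ?_, ?_, ?_, ?_, ?_⟩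
  · rintro ⟨a, b⟩ hab
    have := (h.rel a b).1 hab
    exact ⟨this.1, this.2.1, this.2.2.1⟩
  · intro x; apply card_le_two_of _ _ s
    intro a ha b hb h1 h2; exact h.si a ha b hb (h1.trans h2.symm)
  · intro x; apply card_le_two_of _ _ t
    intro a ha b hb h1 h2; exact h.ti a ha b hb (h1.trans h2.symm)
  · intro a ha; apply card_le_one_of
    intro b hb c hc h1 h2
    have := h.rel b a
    have := h.rel c a
    apply h.si b hb c hc (h1.1.trans h2.1.symm)
    exact bool3 _ _ (t a) (by grind) (by grind)
  · intro a ha; apply card_le_one_of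
    intro b hb c hc h1 h2
    have := h.rel a b
    have := h.rel a c
    apply h.ti b hb c hc (h1.1.trans h2.1.symm)
    exact bool3 _ _ (s a) (by grind) (by grind)
  · intro a ha; apply card_le_one_of
    intro b hb c hc h1 h2
    have := h.rel b a
    have := h.rel c a
    apply h.si b hb c hc <;> grind
  · intro a ha; apply card_le_one_of
    intro b hb c hc h1 h2
    have := h.rel a b
    have := h.rel a c
    apply h.ti b hb c hc <;> grind
  · obtain ⟨r, hr⟩ := h.rank
    refine ⟨Q.A.sup r + 2, ?_⟩
    intro l hl hlen
    by_contra hno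
    have h2 := chain_of_noRel Q l hno
    obtain ⟨hne, hA, h3⟩ := hl
    have h4 : List.IsChain (fun a b => r b < r a) l := by
      clear hlen hno hne
      induction l with
      | nil => exact List.isChain_nil
      | cons a l ih =>
        cases l with
        | nil => exact List.isChain_singleton _
        | cons b l =>
          replace h3 : List.IsChain _ _ := h3
          rw [List.isChain_cons_cons] at *
          have ha := hA a (by simp)
          have hb := hA b (by simp)
          have := h.rel a b
          refine ⟨hr a ha b hb h3.1 (by grind), ih h2.2 (fun c hc => hA c (by simp at hc ⊢; tauto)) h3.2⟩
    cases l with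
    | nil => simp at hne
    | cons a l =>
      have := chain_len r l a h4
      have h5 : r a ≤ Q.A.sup r := Finset.le_sup (hA a (by simp))
      simp at hlen
      omega

/-- being in a triangle -/
def InTri (Q : QuivRel) (a : ℕ) : Prop := ∃ b c, Tri Q a b c

theorem Good.tri_unique {Q : QuivRel} {s t : ℕ → Bool} (h : Good Q s t) {a b b' c : ℕ}
    (hT : Tri Q a b c) (hr : (a, b') ∈ Q.rel) : b' = b := by
  have h1 := (h.rel a b').1 hr
  have h2 := (h.rel a b).1 hT.2.2.2.1
  exact h.ti b' h1.2.1 b h2.2.1 (by grind) (by grind)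

theorem Good.tri_unique' {Q : QuivRel} {s t : ℕ → Bool} (h : Good Q s t) {a b c c' : ℕ}
    (hT : Tri Q a b c) (hr : (c', a) ∈ Q.rel) : c' = c := by
  have h1 := (h.rel c' a).1 hr
  have h2 := (h.rel c a).1 hT.2.2.2.2.2
  exact h.si c' h1.1 c h2.1 (by grind) (by grind)

theorem Good.inTri_iff {Q : QuivRel} {s t : ℕ → Bool} (h : Good Q s t) {a b : ℕ}
    (hr : (a, b) ∈ Q.rel) : InTri Q a ↔ InTri Q b := by
  constructor
  · rintro ⟨b', c, hT⟩
    obtain rfl := h.tri_unique hT hr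
    exact ⟨c, a, hT.rot⟩
  · rintro ⟨c, a', hT⟩
    obtain rfl := h.tri_unique' hT hr
    exact ⟨b, c, hT.rot.rot⟩

theorem z2 (x : ZMod 2) : x = 0 ∨ x = 1 := by revert x; decide

/-- cut for an arrow outside the triangles -/
theorem Good.cut {Q : QuivRel} {s t : ℕ → Bool} (h : Good Q s t) {α : ℕ} (hα : α ∈ Q.A)
    (hn : ¬ InTri Q α) : ∃ D : ℕ → Prop, ¬ D (Q.src α) ∧ D (Q.tgt α) ∧
      ∀ a ∈ Q.A, a ≠ α → (D (Q.src a) ↔ D (Q.tgt a)) := by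
  obtain ⟨f, hf⟩ := h.h1 (fun a => if a = α then 1 else 0) (by
    intro a b c hT
    have h1 : a ≠ α := by rintro rfl; exact hn ⟨_, _, hT⟩
    have h2 : b ≠ α := by rintro rfl; exact hn ⟨_, _, hT.rot⟩
    have h3 : c ≠ α := by rintro rfl; exact hn ⟨_, _, hT.rot.rot⟩
    simp [h1, h2, h3])
  refine ⟨fun v => f v ≠ f (Q.src α), by simp, ?_, ?_⟩
  · have := hf α hα
    simp at this
    intro h'
    rw [h'] at this
    revert this
    generalize f (Q.src α) = x
    revert x; decide
  · intro a ha hne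
    have := hf a ha
    simp [hne] at this
    have : f (Q.src a) = f (Q.tgt a) := by
      revert this
      generalize f (Q.src a) = x
      generalize f (Q.tgt a) = y
      revert x y; decide
    simp only [this]

theorem Good.noLoops {Q : QuivRel} {s t : ℕ → Bool} (h : Good Q s t) : NoLoops Q := by
  intro a ha hl
  by_cases hn : InTri Q a
  · obtain ⟨b, c, hT⟩ := hn
    obtain ⟨f, hf⟩ := h.h1 (fun x => if x = a ∨ x = b then 1 else 0) (by
      intro a' b' c' hT'
      have key : ∀ x y z, Tri Q x y z → x = a → y = b ∧ z = c := by
        intro x y z h1 h2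
        subst h2
        exact ⟨h.tri_unique hT h1.2.2.2.1, h.tri_unique' hT h1.2.2.2.2.2⟩
      have key2 : ∀ x y z, Tri Q x y z → x = b → y = c ∧ z = a := by
        intro x y z h1 h2
        subst h2
        exact ⟨h.tri_unique hT.rot h1.2.2.2.1, h.tri_unique' hT.rot h1.2.2.2.2.2⟩
      have k1 := key _ _ _ hT'
      have k2 := key _ _ _ hT'.rot
      have k3 := key _ _ _ hT'.rot.rot
      have l1 := key2 _ _ _ hT'
      have l2 := key2 _ _ _ hT'.rot
      have l3 := key2 _ _ _ hT'.rot.rot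
      have d1 := hT.1
      have d2 := hT.2.1
      have d3 := hT.2.2.1
      set g : ℕ → ZMod 2 := fun x => if x = a ∨ x = b then 1 else 0 with hg
      have ga : g a = 1 := by simp [hg]
      have gb : g b = 1 := by simp [hg]
      have gc : g c = 0 := by simp [hg, d2.symm, d3.symm]
      have gz : ∀ x, x ≠ a → x ≠ b → g x = 0 := by intro x h1 h2; simp [hg, h1, h2]
      change g a' + g b' + g c' = 0
      by_cases e1 : a' = a
      · obtain ⟨h1, h2⟩ := k1 e1; rw [e1, h1, h2, ga, gb, gc]; decide
      by_cases e2 : b' = a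
      · obtain ⟨h1, h2⟩ := k2 e2; rw [e2, h1, h2, ga, gb, gc]; decide
      by_cases e3 : c' = a
      · obtain ⟨h1, h2⟩ := k3 e3; rw [e3, h1, h2, ga, gb, gc]; decide
      by_cases f1 : a' = b
      · exact absurd (l1 f1).2 e3
      by_cases f2 : b' = b
      · exact absurd (l2 f2).2 e1
      by_cases f3 : c' = b
      · exact absurd (l3 f3).2 e2
      rw [gz _ e1 f1, gz _ e2 f2, gz _ e3 f3]; decide)
    have := hf a ha
    rw [hl] at this
    simp at this
    revert this
    generalize f (Q.tgt a) = x
    revert x; decide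
  · obtain ⟨D, h1, h2, -⟩ := h.cut ha hn
    rw [hl] at h1; exact h1 h2



/-- Reflection data at `z`, in the language of half-vertices. -/
structure RD (Q : QuivRel) (s t : ℕ → Bool) (z : ℕ) (Q' : QuivRel) (s' t' : ℕ → Bool) : Prop where
  V : Q'.V = Q.V
  A : Q'.A = Q.A
  i1 : ∀ a ∈ Q.A, Q.tgt a = z → Q'.src a = z
  i2 : ∀ a ∈ Q.A, Q.tgt a = z → s' a = !t a
  i3 : ∀ a ∈ Q.A, Q.tgt a = z → Q'.tgt a = Q.src a
  i4 : ∀ a ∈ Q.A, Q.tgt a = z → t' a = s a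
  o : ∀ a ∈ Q.A, Q.src a = z → ∃ e ∈ Q.A, Q.tgt e = z ∧ t e = !s a ∧
    Q'.src a = Q.src e ∧ s' a = s e
  n1 : ∀ a ∈ Q.A, Q.tgt a ≠ z → Q.src a ≠ z → Q'.src a = Q.src a
  n2 : ∀ a ∈ Q.A, Q.tgt a ≠ z → Q.src a ≠ z → s' a = s a
  m : ∀ a ∈ Q.A, Q.tgt a ≠ z →
    (∃ e ∈ Q.A, Q.tgt e = z ∧ Q.src e = Q.tgt a ∧ s e = t a ∧ Q'.tgt a = z ∧ t' a = t e) ∨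
    ((∀ e ∈ Q.A, Q.tgt e = z → Q.src e = Q.tgt a → s e = t a → False) ∧
      Q'.tgt a = Q.tgt a ∧ t' a = t a)
  rel : ∀ a b, (a, b) ∈ Q'.rel ↔ a ∈ Q.A ∧ b ∈ Q.A ∧ Q'.src a = Q'.tgt b ∧ s' a = t' b

open Classical in
theorem exists_RD {Q : QuivRel} {s t : ℕ → Bool} (h : Good Q s t) {z : ℕ}
    (hc : CanReflect Q z) : ∃ Q' s' t', RD Q s t z Q' s' t' := by
  have ho : ∀ a, ∃ e, a ∈ Q.A → Q.src a = z → e ∈ Q.A ∧ Q.tgt e = z ∧ t e = !s a := by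
    intro a
    by_cases ha : a ∈ Q.A ∧ Q.src a = z
    · obtain ⟨b, hb, hbz, hr⟩ := hc.2 a ha.1 ha.2
      refine ⟨b, fun _ _ => ⟨hb, hbz, ?_⟩⟩
      have := h.rel a b
      have h2 : s a ≠ t b := by grind
      revert h2
      cases s a <;> cases t b <;> simp
    · exact ⟨0, fun h1 h2 => absurd ⟨h1, h2⟩ ha⟩
  choose eo heo using ho
  have hm : ∀ a, ∃ e, (∃ e ∈ Q.A, Q.tgt e = z ∧ Q.src e = Q.tgt a ∧ s e = t a) →
      e ∈ Q.A ∧ Q.tgt e = z ∧ Q.src e = Q.tgt a ∧ s e = t a := by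
    intro a
    by_cases ha : ∃ e ∈ Q.A, Q.tgt e = z ∧ Q.src e = Q.tgt a ∧ s e = t a
    · obtain ⟨e, he⟩ := ha
      exact ⟨e, fun _ => he⟩
    · exact ⟨0, fun h1 => absurd h1 ha⟩
  choose em hem using hm
  let M : ℕ → Prop := fun a => ∃ e ∈ Q.A, Q.tgt e = z ∧ Q.src e = Q.tgt a ∧ s e = t a
  let src' : ℕ → ℕ := fun a => if Q.tgt a = z then z else
    if Q.src a = z then Q.src (eo a) else Q.src a
  let s' : ℕ → Bool := fun a => if Q.tgt a = z then !t a else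
    if Q.src a = z then s (eo a) else s a
  let tgt' : ℕ → ℕ := fun a => if Q.tgt a = z then Q.src a else
    if M a then z else Q.tgt a
  let t' : ℕ → Bool := fun a => if Q.tgt a = z then s a else
    if M a then t (em a) else t a
  refine ⟨⟨Q.V, Q.A, src', tgt', (Q.A ×ˢ Q.A).filter fun p => src' p.1 = tgt' p.2 ∧ s' p.1 = t' p.2⟩,
    s', t', rfl, rfl, ?_, ?_, ?_, ?_, ?_, ?_, ?_, ?_, ?_⟩
  · intro a ha h1; simp [src', h1]
  · intro a ha h1; simp [s', h1]
  · intro a ha h1; simp [tgt', h1]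
  · intro a ha h1; simp [t', h1]
  · intro a ha h1
    have h2 : Q.tgt a ≠ z := by intro h2; exact h.noLoops a ha (h1.trans h2.symm)
    obtain ⟨e1, e2, e3⟩ := heo a ha h1
    exact ⟨eo a, e1, e2, e3, by simp [src', h1, h2], by simp [s', h1, h2]⟩
  · intro a ha h1 h2; simp [src', h1, h2]
  · intro a ha h1 h2; simp [s', h1, h2]
  · intro a ha h1
    by_cases hM : M a
    · left
      obtain ⟨e1, e2, e3, e4⟩ := hem a hM
      exact ⟨em a, e1, e2, e3, e4, by simp [tgt', h1, hM], by simp [t', h1, hM]⟩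
    · right
      refine ⟨?_, by simp [tgt', h1, hM], by simp [t', h1, hM]⟩
      intro e e1 e2 e3 e4; exact hM ⟨e, e1, e2, e3, e4⟩
  · intro a b; simp [and_assoc]

theorem boolne {x y : Bool} (h : x ≠ y) : x = !y := by revert h; cases x <;> cases y <;> simp

section
variable {Q : QuivRel} {s t : ℕ → Bool} {z : ℕ} {Q' : QuivRel} {s' t' : ℕ → Bool}

/-- description of the relations of the reflected quiver -/
theorem RD.rel_iff (h : Good Q s t) (hz : z ∈ Q.V) (R : RD Q s t z Q' s' t') (a b : ℕ) :
    (a, b) ∈ Q'.rel ↔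
    (((a, b) ∈ Q.rel ∧ Q.tgt a ≠ z ∧ Q.src a ≠ z) ∨
     (a ∈ Q.A ∧ b ∈ Q.A ∧ Q.src a = z ∧ Q.tgt b = z ∧ (a, b) ∉ Q.rel) ∨
     (a ∈ Q.A ∧ b ∈ Q.A ∧ Q.tgt a = z ∧
       ∃ c ∈ Q.A, c ≠ a ∧ Q.tgt c = z ∧ Q.src c = Q.tgt b ∧ (c, b) ∈ Q.rel)) := by
  have hl := h.noLoops
  unfold NoLoops at hl
  have hsi := h.si
  have hti := h.ti
  by_cases ha : a ∈ Q.A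
  swap
  · have := R.rel a b
    have := h.rel a b
    grind
  by_cases hb : b ∈ Q.A
  swap
  · have := R.rel a b
    have := h.rel a b
    grind
  rw [R.rel]
  have hr := h.rel a b
  by_cases haz : Q.tgt a = z
  · have h1 := R.i1 a ha haz
    have h2 := R.i2 a ha haz
    by_cases hbz : Q.tgt b = z
    · have h3 := R.i3 b hb hbz
      constructor
      · grind
      · rintro (h | h | ⟨_, _, _, c, hc, hca, hcz, hs, hr⟩)
        · grind
        · grind
        · grind
    · have h3 := R.m b hb hbz
      constructor
      · rintro ⟨-, -, h4, h5⟩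
        right; right
        obtain ⟨e, he, e1, e2, e3, e4, e5⟩ | h6 := h3
        · refine ⟨ha, hb, haz, e, he, ?_, e1, e2, ?_⟩
          · rintro rfl; rw [h2, e5] at h5; simp at h5
          · rw [h.rel]; exact ⟨he, hb, e2, e3⟩
        · grind
      · rintro (h7 | h7 | ⟨_, _, _, c, hc, hca, hcz, hs, hrc⟩)
        · grind
        · grind
        · have hr2 := (h.rel c b).1 hrc
          obtain ⟨e, he, e1, e2, e3, e4, e5⟩ | h6 := h3
          · have : e = c := hsi e he c hc (by grind) (by grind)
            subst this
            refine ⟨ha, hb, by grind, ?_⟩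
            rw [h2, e5]
            have : t e ≠ t a := by intro h9; exact hca (hti e he a ha (by grind) h9)
            exact (boolne this).symm
          · exact (h6.1 c hc hcz hs hr2.2.2.2).elim
  · by_cases has : Q.src a = z
    · obtain ⟨e, he, e1, e2, e3, e4⟩ := R.o a ha has
      by_cases hbz : Q.tgt b = z
      · have h3 := R.i3 b hb hbz
        have h4 := R.i4 b hb hbz
        have : e = b ↔ (a, b) ∉ Q.rel := by
          constructor
          · rintro rfl; rw [h.rel]; rw [e2]; simp
          · intro h5; apply hti e he b hb (by grind)
            rw [e2]; have : s a ≠ t b := by grind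
            rw [boolne this]; simp
        grind
      · have h3 := R.m b hb hbz
        grind
    · have h1 := R.n1 a ha haz has
      have h2 := R.n2 a ha haz has
      by_cases hbz : Q.tgt b = z
      · have h3 := R.i3 b hb hbz
        have h4 := R.i4 b hb hbz
        grind
      · have h3 := R.m b hb hbz
        grind

theorem RD.isReflection (h : Good Q s t) (hc : CanReflect Q z) (R : RD Q s t z Q' s' t') :
    IsReflection Q z Q' := by
  refine ⟨h.gentle, h.noLoops, hc, R.V, R.A, ?_, ?_, ?_, ?_, R.rel_iff h hc.1⟩
  · intro a ha haz; exact ⟨R.i1 a ha haz, R.i3 a ha haz⟩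
  · intro a ha has b hb hbz hr
    obtain ⟨e, he, e1, e2, e3, e4⟩ := R.o a ha has
    have : e = b := by
      apply h.ti e he b hb (by grind)
      have := h.rel a b
      rw [e2]; have : s a ≠ t b := by grind
      rw [boolne this]; simp
    subst this; exact e3
  · intro a ha h1 h2; exact R.n1 a ha h1 h2
  · intro a ha h1
    have h3 := R.m a ha h1
    have h4 := fun b => h.rel b a
    constructor
    · rintro ⟨b, hb, b1, b2, b3⟩
      have := h4 b
      grind
    · intro h5
      obtain ⟨e, he, e1, e2, e3, e4, e5⟩ | h6 := h3
      · exact (h5 ⟨e, he, e1, e2, (h4 e).2 ⟨he, ha, e2, e3⟩⟩).elim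
      · exact h6.2.1

/-- Triangles after reflection. -/
theorem RD.tri (h : Good Q s t) (hc : CanReflect Q z) (R : RD Q s t z Q' s' t') {a b c : ℕ}
    (hT : Tri Q a b c) (haz : Q.tgt a ≠ z) (hbz : Q.tgt b ≠ z) (hcz : Q.tgt c ≠ z) :
    Tri Q' a b c := by
  have r1 := R.rel_iff h hc.1 a b
  have r2 := R.rel_iff h hc.1 b c
  have r3 := R.rel_iff h hc.1 c a
  have q1 := h.rel a b
  have q2 := h.rel b c
  have q3 := h.rel c a
  unfold Tri at *
  grind

theorem RD.tri2 (h : Good Q s t) (hc : CanReflect Q z) (R : RD Q s t z Q' s' t') {a b c : ℕ}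
    (hT : Tri Q a c b) (haz : Q.tgt a = z) : ∃ e ∈ Q.A, Q.tgt e = z ∧ t e = (!s b) ∧ e ≠ a ∧
    Q'.src b = Q.src e ∧ Tri Q' b e c := by
  have hl := h.noLoops
  unfold NoLoops at hl
  have q1 := (h.rel a c).1 hT.2.2.2.1
  have q2 := (h.rel c b).1 hT.2.2.2.2.1
  have q3 := (h.rel b a).1 hT.2.2.2.2.2
  obtain ⟨ha, hc', q1, q1'⟩ := q1
  obtain ⟨-, hb, q2, q2'⟩ := q2
  obtain ⟨-, -, q3, q3'⟩ := q3
  obtain ⟨e, he, e1, e2, e3, e4⟩ := R.o b hb (by grind)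
  have hea : e ≠ a := by rintro rfl; rw [q3'] at e2; cases h9 : t e <;> simp [h9] at e2
  refine ⟨e, he, e1, e2, hea, e3, ?_⟩
  have r1 := R.rel_iff h hc.1 b e
  have r2 := R.rel_iff h hc.1 e c
  have r3 := R.rel_iff h hc.1 c b
  have q4 := (h.rel b e)
  have q5 := hT.2.2.2.2.1
  have q6 := hT.2.2.2.1
  have l1 := hl a ha
  have l2 := hl b hb
  have l3 := hl c hc'
  have l4 := hl e he
  have nbe : (b, e) ∉ Q.rel := by
    rw [q4, e2]; simp
  refine ⟨by grind, by grind, by have := hT.2.1; grind, ?_, ?_, ?_⟩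
  · rw [r1]; right; left; exact ⟨hb, he, by grind, e1, nbe⟩
  · rw [r2]; right; right; exact ⟨he, hc', e1, a, ha, hea.symm, haz, q1, q6⟩
  · rw [r3]; left; exact ⟨q5, by grind, by grind⟩

end

section
variable {Q : QuivRel} {s t : ℕ → Bool} {z : ℕ} {Q' : QuivRel} {s' t' : ℕ → Bool}

theorem notinj {x y : Bool} (h : (!x) = !y) : x = y := by
  cases x <;> cases y <;> simp_all

/-- the three kinds of arrows, seen from the source -/
theorem RD.srcCases (h : Good Q s t) (R : RD Q s t z Q' s' t') {a : ℕ} (ha : a ∈ Q.A) :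
    (Q.tgt a = z ∧ Q.src a ≠ z ∧ Q'.src a = z ∧ s' a = !t a) ∨
    (Q.tgt a ≠ z ∧ Q.src a = z ∧ ∃ e ∈ Q.A, Q.tgt e = z ∧ Q.src e ≠ z ∧ t e = (!s a) ∧
      Q'.src a = Q.src e ∧ s' a = s e) ∨
    (Q.tgt a ≠ z ∧ Q.src a ≠ z ∧ Q'.src a = Q.src a ∧ s' a = s a) := by
  have hl := h.noLoops a ha
  by_cases haz : Q.tgt a = z
  · left; exact ⟨haz, by grind, R.i1 a ha haz, R.i2 a ha haz⟩
  · right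
    by_cases has : Q.src a = z
    · left
      obtain ⟨e, he, e1, e2, e3, e4⟩ := R.o a ha has
      have := h.noLoops e he
      exact ⟨haz, has, e, he, e1, by grind, e2, e3, e4⟩
    · right; exact ⟨haz, has, R.n1 a ha haz has, R.n2 a ha haz has⟩

/-- the three kinds of arrows, seen from the target -/
theorem RD.tgtCases (h : Good Q s t) (R : RD Q s t z Q' s' t') {a : ℕ} (ha : a ∈ Q.A) :
    (Q.tgt a = z ∧ Q.src a ≠ z ∧ Q'.tgt a = Q.src a ∧ t' a = s a) ∨
    (Q.tgt a ≠ z ∧ ∃ e ∈ Q.A, Q.tgt e = z ∧ Q.src e ≠ z ∧ Q.src e = Q.tgt a ∧ s e = t a ∧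
      Q'.tgt a = z ∧ t' a = t e) ∨
    (Q.tgt a ≠ z ∧ (∀ e ∈ Q.A, Q.tgt e = z → Q.src e = Q.tgt a → s e = t a → False) ∧
      Q'.tgt a = Q.tgt a ∧ t' a = t a) := by
  have hl := h.noLoops a ha
  by_cases haz : Q.tgt a = z
  · left; exact ⟨haz, by grind, R.i3 a ha haz, R.i4 a ha haz⟩
  · right
    obtain ⟨e, he, e1, e2, e3, e4⟩ | h1 := R.m a ha haz
    · left
      have := h.noLoops e he
      exact ⟨haz, e, he, e1, by grind, e2, e3, e4⟩
    · right; exact ⟨haz, h1⟩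

theorem RD.si (h : Good Q s t) (R : RD Q s t z Q' s' t') (a : ℕ) (ha : a ∈ Q.A) (b : ℕ)
    (hb : b ∈ Q.A) (h1 : Q'.src a = Q'.src b) (h2 : s' a = s' b) : a = b := by
  have hsi := h.si
  have hti := h.ti
  obtain ⟨a1, a2, a3, a4⟩ | ⟨a1, a2, e, he, e1, e2, e3, e4, e5⟩ | ⟨a1, a2, a3, a4⟩ := R.srcCases h ha <;>
  obtain ⟨b1, b2, b3, b4⟩ | ⟨b1, b2, f, hf, f1, f2, f3, f4, f5⟩ | ⟨b1, b2, b3, b4⟩ := R.srcCases h hb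
  · exact hti a ha b hb (by grind) (notinj (by grind))
  · grind
  · grind
  · grind
  · have : e = f := hsi e he f hf (by grind) (by grind)
    subst this
    exact hsi a ha b hb (by grind) (notinj (by grind))
  · have := hsi e he b hb (by grind) (by grind)
    grind
  · grind
  · have := hsi a ha f hf (by grind) (by grind)
    grind
  · exact hsi a ha b hb (by grind) (by grind)

theorem RD.ti (h : Good Q s t) (R : RD Q s t z Q' s' t') (a : ℕ) (ha : a ∈ Q.A) (b : ℕ)
    (hb : b ∈ Q.A) (h1 : Q'.tgt a = Q'.tgt b) (h2 : t' a = t' b) : a = b := by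
  have hsi := h.si
  have hti := h.ti
  obtain ⟨a1, a2, a3, a4⟩ | ⟨a1, e, he, e1, e2, e3, e4, e5, e6⟩ | ⟨a1, a2, a3, a4⟩ := R.tgtCases h ha <;>
  obtain ⟨b1, b2, b3, b4⟩ | ⟨b1, f, hf, f1, f2, f3, f4, f5, f6⟩ | ⟨b1, b2, b3, b4⟩ := R.tgtCases h hb
  · exact hsi a ha b hb (by grind) (by grind)
  · grind
  · exact (b2 a ha a1 (by grind) (by grind)).elim
  · grind
  · have : e = f := hti e he f hf (by grind) (by grind)
    subst this
    exact hti a ha b hb (by grind) (by grind)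
  · grind
  · exact (a2 b hb b1 (by grind) (by grind)).elim
  · grind
  · exact hti a ha b hb (by grind) (by grind)

open Classical in
theorem RD.rank (h : Good Q s t) (R : RD Q s t z Q' s' t') :
    ∃ r : ℕ → ℕ, ∀ a ∈ Q.A, ∀ b ∈ Q.A, Q'.src a = Q'.tgt b → s' a ≠ t' b → r b < r a := by
  obtain ⟨r, hr⟩ := h.rank
  have hsi := h.si
  have hti := h.ti
  have hd : ∀ a, ∃ n, (∀ d ∈ Q.A, Q.tgt d = Q.src a → t d = s a → n = 2 * r d + 3) ∧
      ((∀ d ∈ Q.A, Q.tgt d = Q.src a → t d = s a → False) → n = 0) := by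
    intro a
    by_cases hd : ∃ d ∈ Q.A, Q.tgt d = Q.src a ∧ t d = s a
    · obtain ⟨d, hd, d1, d2⟩ := hd
      refine ⟨2 * r d + 3, ?_, ?_⟩
      · intro d' hd' d1' d2'
        rw [hti d hd d' hd' (by grind) (by grind)]
      · intro h'; exact (h' d hd d1 d2).elim
    · exact ⟨0, by grind, by grind⟩
  choose n hn1 hn2 using hd
  refine ⟨fun a => if Q.tgt a = z then n a else 2 * r a + 2, ?_⟩
  intro a ha b hb h1 h2
  obtain ⟨a1, a2, a3, a4⟩ | ⟨a1, a2, e, he, e1, e2, e3, e4, e5⟩ | ⟨a1, a2, a3, a4⟩ := R.srcCases h ha <;>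
  obtain ⟨b1, b2, b3, b4⟩ | ⟨b1, f, hf, f1, f2, f3, f4, f5, f6⟩ | ⟨b1, b2, b3, b4⟩ := R.tgtCases h hb
  · grind
  · -- a in, b moved : f = a
    have : f = a := by
      apply hti f hf a ha (by grind)
      rw [a4, f6] at h2
      have := boolne h2
      exact (notinj this).symm
    subst this
    have := hn1 f b hb f3.symm f4.symm
    simp [a1, b1, this]
  · grind
  · -- a out via e, b in
    simp only [a1, b1, if_true, if_false]
    by_cases hd : ∃ d ∈ Q.A, Q.tgt d = Q.src b ∧ t d = s b
    · obtain ⟨d, hd, d1, d2⟩ := hd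
      rw [hn1 b d hd d1 d2]
      have g1 := hr e he d hd (by grind) (by grind)
      have g2 := hr a ha e he (by grind) (by rw [e3]; simp)
      omega
    · rw [hn2 b (by grind)]; omega
  · grind
  · have g1 := hr e he b hb (by grind) (by grind)
    have g2 := hr a ha e he (by grind) (by rw [e3]; simp)
    simp only [a1, b1, if_false]
    omega
  · simp only [a1, b1, if_true, if_false]
    by_cases hd : ∃ d ∈ Q.A, Q.tgt d = Q.src b ∧ t d = s b
    · obtain ⟨d, hd, d1, d2⟩ := hd
      rw [hn1 b d hd d1 d2]
      have g1 := hr a ha d hd (by grind) (by grind)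
      omega
    · rw [hn2 b (by grind)]; omega
  · grind
  · have g1 := hr a ha b hb (by grind) (by grind)
    simp only [a1, b1, if_false]
    omega

theorem RD.mem (h : Good Q s t) (hz : z ∈ Q.V) (R : RD Q s t z Q' s' t') (a : ℕ) (ha : a ∈ Q.A) :
    Q'.src a ∈ Q.V ∧ Q'.tgt a ∈ Q.V := by
  have hm := h.mem
  have h1 := R.srcCases h ha
  have h2 := R.tgtCases h ha
  grind

theorem RD.conn (h : Good Q s t) (R : RD Q s t z Q' s' t') (X : ℕ → Prop)
    (hX : ∀ a ∈ Q.A, (X (Q'.src a) ↔ X (Q'.tgt a))) :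
    ∀ a ∈ Q.A, (X (Q.src a) ↔ X (Q.tgt a)) := by
  have key : ∀ a ∈ Q.A, Q.tgt a = z → (X (Q.src a) ↔ X z) := by
    intro a ha haz
    have := hX a ha
    rw [R.i1 a ha haz, R.i3 a ha haz] at this
    exact this.symm
  intro a ha
  have h0 := hX a ha
  have h1 := R.srcCases h ha
  have h2 := R.tgtCases h ha
  grind

open Classical in
theorem RD.h1 (h : Good Q s t) (hc : CanReflect Q z) (R : RD Q s t z Q' s' t') (g' : ℕ → ZMod 2)
    (hg' : ∀ a b c, Tri Q' a b c → g' a + g' b + g' c = 0) :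
    ∃ f : ℕ → ZMod 2, ∀ a ∈ Q.A, f (Q'.src a) + f (Q'.tgt a) = g' a := by
  have hsi := h.si
  have hti := h.ti
  have two : ∀ x : ZMod 2, x + x = 0 := by decide
  -- correction terms
  have hp : ∀ a, ∃ x : ZMod 2, (∀ e ∈ Q.A, Q.tgt e = z → Q.src a = z → t e = (!s a) → x = g' e) ∧
      (Q.src a ≠ z → x = 0) := by
    intro a
    by_cases h1 : ∃ e ∈ Q.A, Q.tgt e = z ∧ Q.src a = z ∧ t e = (!s a)
    · obtain ⟨e, he, e1, e2, e3⟩ := h1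
      refine ⟨g' e, ?_, fun h => absurd e2 h⟩
      intro e' he' e1' e2' e3'
      rw [hti e he e' he' (by grind) (by grind)]
    · exact ⟨0, by grind, by grind⟩
  have hq : ∀ a, ∃ x : ZMod 2,
      (∀ e ∈ Q.A, Q.tgt e = z → Q.src e = Q.tgt a → s e = t a → x = g' e) ∧
      ((∀ e ∈ Q.A, Q.tgt e = z → Q.src e = Q.tgt a → s e = t a → False) → x = 0) := by
    intro a
    by_cases h1 : ∃ e ∈ Q.A, Q.tgt e = z ∧ Q.src e = Q.tgt a ∧ s e = t a
    · obtain ⟨e, he, e1, e2, e3⟩ := h1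
      refine ⟨g' e, ?_, fun h => (h e he e1 e2 e3).elim⟩
      intro e' he' e1' e2' e3'
      rw [hsi e he e' he' (by grind) (by grind)]
    · exact ⟨0, by grind, by grind⟩
  choose P hP1 hP2 using hp
  choose K hK1 hK2 using hq
  -- potential on Q
  obtain ⟨f, hf⟩ := h.h1 (fun a => if Q.tgt a = z then g' a else g' a + P a + K a) (by
    have main : ∀ a b c, Tri Q a b c → Q.tgt a = z →
        (if Q.tgt a = z then g' a else g' a + P a + K a) +
        (if Q.tgt b = z then g' b else g' b + P b + K b) +
        (if Q.tgt c = z then g' c else g' c + P c + K c) = 0 := by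
      intro a c b hT haz
      obtain ⟨e, he, e1, e2, e3, e4, hT'⟩ := R.tri2 h hc hT haz
      have := hg' _ _ _ hT'
      obtain ⟨ha, hc', q1, q1'⟩ := (h.rel a c).1 hT.2.2.2.1
      obtain ⟨-, hb, q2, q2'⟩ := (h.rel c b).1 hT.2.2.2.2.1
      obtain ⟨-, -, q3, q3'⟩ := (h.rel b a).1 hT.2.2.2.2.2
      have l1 := h.noLoops a ha
      have l2 := h.noLoops b hb
      have l3 := h.noLoops c hc'
      have hcz : Q.tgt c ≠ z := by grind
      have hbz : Q.tgt b ≠ z := by grind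
      rw [if_pos haz, if_neg hcz, if_neg hbz]
      rw [hP1 b e he e1 (by grind) e2, hP2 c (by grind), hK1 c a ha haz (by grind) (by grind)]
      rw [hK2 b]
      · calc g' a + (g' c + 0 + g' a) + (g' b + g' e + 0)
            = (g' b + g' e + g' c) + (g' a + g' a) := by ring
          _ = 0 := by rw [this, two]; simp
      · intro e' he' e1' e2' e3'
        have := hsi e' he' c hc' (by grind) (by grind)
        grind
    intro a b c hT
    by_cases haz : Q.tgt a = z
    · exact main a b c hT haz
    by_cases hbz : Q.tgt b = z
    · rw [← main b c a hT.rot hbz]; ring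
    by_cases hcz : Q.tgt c = z
    · rw [← main c a b hT.rot.rot hcz]; ring
    have := hg' _ _ _ (R.tri h hc hT haz hbz hcz)
    have aux : ∀ a b c, Tri Q a b c → Q.tgt a ≠ z → Q.tgt b ≠ z → Q.tgt c ≠ z →
        P a = 0 ∧ K a = 0 := by
      intro a b c hT haz hbz hcz
      obtain ⟨ha, hc', q1, q1'⟩ := (h.rel a b).1 hT.2.2.2.1
      obtain ⟨hcc, -, q3, q3'⟩ := (h.rel c a).1 hT.2.2.2.2.2
      refine ⟨hP2 a (by grind), hK2 a ?_⟩
      intro e' he' e1' e2' e3'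
      have := hsi e' he' c hcc (by grind) (by grind)
      grind
    obtain ⟨x1, y1⟩ := aux a b c hT haz hbz hcz
    obtain ⟨x2, y2⟩ := aux b c a hT.rot hbz hcz haz
    obtain ⟨x3, y3⟩ := aux c a b hT.rot.rot hcz haz hbz
    simp only [if_neg haz, if_neg hbz, if_neg hcz, x1, x2, x3, y1, y2, y3, add_zero]
    exact this)
  refine ⟨f, ?_⟩
  have cancel : ∀ x y g : ZMod 2, x + y = g → x = y + g ∧ y = x + g := by decide
  have key : ∀ a ∈ Q.A, Q.tgt a = z → f (Q.src a) + f z = g' a := by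
    intro a ha haz
    have := hf a ha
    simp only [haz, if_true] at this
    exact this
  intro a ha
  have h0 := hf a ha
  obtain ⟨a1, a2, a3, a4⟩ | ⟨a1, a2, e, he, e1, e2, e3, e4, e5⟩ | ⟨a1, a2, a3, a4⟩ := R.srcCases h ha
  · rw [R.i1 a ha a1, R.i3 a ha a1, ← key a ha a1, add_comm]
  · rw [if_neg a1, hP1 a e he e1 a2 e3, a2] at h0
    rw [e4, (cancel _ _ _ (key e he e1)).1]
    obtain ⟨b1, -⟩ | ⟨b1, d, hd, f1, f2, f3, f4, f5, f6⟩ | ⟨b1, b2, b3, b4⟩ := R.tgtCases h ha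
    · exact absurd b1 a1
    · rw [hK1 a d hd f1 f3 f4, ← f3, (cancel _ _ _ (key d hd f1)).1] at h0
      rw [f5]
      generalize f z = x at *
      generalize g' e = y at *
      generalize g' d = w at *
      generalize g' a = v at *
      clear * - h0
      revert x y w v; decide
    · rw [hK2 a b2] at h0
      rw [b3]
      generalize f z = x at *
      generalize g' e = y at *
      generalize f (Q.tgt a) = w at *
      generalize g' a = v at *
      clear * - h0
      revert x y w v; decide
  · rw [if_neg a1, hP2 a a2] at h0
    rw [a3]
    obtain ⟨b1, -⟩ | ⟨b1, d, hd, f1, f2, f3, f4, f5, f6⟩ | ⟨b1, b2, b3, b4⟩ := R.tgtCases h ha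
    · exact absurd b1 a1
    · rw [hK1 a d hd f1 f3 f4, ← f3, (cancel _ _ _ (key d hd f1)).1] at h0
      rw [f5]
      generalize f z = x at *
      generalize f (Q.src a) = y at *
      generalize g' d = w at *
      generalize g' a = v at *
      clear * - h0
      revert x y w v; decide
    · rw [hK2 a b2] at h0
      rw [b3, h0]; simp

theorem RD.good (h : Good Q s t) (hc : CanReflect Q z) (R : RD Q s t z Q' s' t') :
    Good Q' s' t' where
  ne := by rw [R.V]; exact h.ne
  mem := by rw [R.V, R.A]; exact R.mem h hc.1
  conn := by
    rw [R.V, R.A]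
    intro X hX
    exact h.conn X (R.conn h X hX)
  rel := by rw [R.A]; exact R.rel
  si := by rw [R.A]; exact R.si h
  ti := by rw [R.A]; exact R.ti h
  rank := by rw [R.A]; exact R.rank h
  h1 := by rw [R.A]; exact R.h1 h hc

end

section
variable {Q : QuivRel} {s t : ℕ → Bool}

/-- A relation of branch arrows together with a cut by its final arrow. -/
structure Cfg (Q : QuivRel) (α β : ℕ) (D : ℕ → Prop) : Prop where
  rel : (α, β) ∈ Q.rel
  nt : ¬ InTri Q α
  d0 : ¬ D (Q.src α)
  d1 : D (Q.tgt α)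
  dc : ∀ a ∈ Q.A, a ≠ α → (D (Q.src a) ↔ D (Q.tgt a))

open Classical in
/-- size of a cut -/
noncomputable def csize (Q : QuivRel) (D : ℕ → Prop) : ℕ := (Q.V.filter D).card

theorem csize_lt {Q Q' : QuivRel} (hV : Q'.V = Q.V) {D D' : ℕ → Prop}
    (h : ∀ v ∈ Q.V, D' v → D v) {z : ℕ} (hz : z ∈ Q.V) (h1 : D z) (h2 : ¬ D' z) :
    csize Q' D' < csize Q D := by
  classical
  unfold csize
  rw [hV]
  apply Finset.card_lt_card
  rw [Finset.ssubset_iff_of_subset]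
  · exact ⟨z, by simp [hz, h1], by simp [h2]⟩
  · intro v hv
    simp at hv ⊢
    exact ⟨hv.1, h v hv.1 hv.2⟩

theorem Good.fst_inj (h : Good Q s t) : Set.InjOn Prod.fst (Q.rel : Set (ℕ × ℕ)) := by
  rintro ⟨a, b⟩ hab ⟨a', b'⟩ hab' he
  simp only at he
  subst he
  have h1 := (h.rel _ _).1 hab
  have h2 := (h.rel _ _).1 hab'
  rw [h.ti b h1.2.1 b' h2.2.1 (by grind) (by grind)]

theorem relcard_le (h : Good Q s t) {Q' : QuivRel} {s' t' : ℕ → Bool} (h' : Good Q' s' t')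
    (π : Equiv.Perm ℕ) (hπ : ∀ a b, (a, b) ∈ Q'.rel → ∃ c, (π a, c) ∈ Q.rel) :
    Q'.rel.card ≤ Q.rel.card := by
  rw [← Finset.card_image_of_injOn h.fst_inj, ← Finset.card_image_of_injOn h'.fst_inj]
  apply Finset.card_le_card_of_injOn π
  · intro a ha
    simp at ha ⊢
    obtain ⟨b, hb⟩ := ha
    exact hπ a b hb
  · exact π.injective.injOn

theorem RD.inTri {z : ℕ} {Q' : QuivRel} {s' t' : ℕ → Bool}
    (h : Good Q s t) (hc : CanReflect Q z) (R : RD Q s t z Q' s' t') {a : ℕ}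
    (hT : InTri Q a) (h1 : Q.tgt a ≠ z) (h2 : Q.src a ≠ z) : InTri Q' a := by
  obtain ⟨b, c, hT⟩ := hT
  have q1 := (h.rel a b).1 hT.2.2.2.1
  by_cases hcz : Q.tgt c = z
  · obtain ⟨e, -, -, -, -, -, hT'⟩ := R.tri2 h hc hT.rot.rot hcz
    exact ⟨_, _, hT'.rot.rot⟩
  · exact ⟨b, c, R.tri h hc hT h1 (by grind) hcz⟩

/-- the cut after the reflection is contained in the one before -/
theorem shrink {α β : ℕ} {D D2 : ℕ → Prop} {Q' : QuivRel} {s' t' : ℕ → Bool}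
    (h : Good Q s t) (C : Cfg Q α β D) (hout : ∀ b ∈ Q.A, Q.src b = Q.tgt α → t α = !s b)
    (R : RD Q s t (Q.tgt α) Q' s' t') (h' : Good Q' s' t') (a0 : ℕ)
    (hD2 : ∀ a ∈ Q.A, a ≠ a0 → (D2 (Q'.src a) ↔ D2 (Q'.tgt a)))
    (hz : ¬ D2 (Q.tgt α)) (hx : ¬ D2 (Q.src α))
    (ha0 : ¬ (D2 (Q'.src a0) ∧ ¬ D (Q'.src a0)) ∧ ¬ (D2 (Q'.tgt a0) ∧ ¬ D (Q'.tgt a0))) :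
    ∀ v ∈ Q.V, D2 v → D v := by
  have hα := ((h.rel _ _).1 C.rel).1
  have key := h'.conn (fun v => D2 v ∧ ¬ D v) (by
    rw [R.A]
    intro e he
    by_cases hea : e = a0
    · subst hea
      exact iff_of_false ha0.1 ha0.2
    have e2 := hD2 e he hea
    by_cases hin : Q.tgt e = Q.tgt α
    · have h1 := R.i1 e he hin
      rw [h1] at e2 ⊢
      grind
    have sc := R.srcCases h he
    have tc := R.tgtCases h he
    have hc := C.dc e he (by grind)
    by_cases hs : Q.src e = Q.tgt α
    · obtain ⟨d, hd, d1, d2, d3, d4⟩ := R.o e he hs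
      have : d = α := h.ti d hd α hα d1 (by rw [d2, hout e he hs])
      subst this
      rw [d3] at e2 ⊢
      grind
    · grind)
  rw [R.V] at key
  intro v hv h1
  by_contra h2
  have := key v hv _ (h.mem α hα).2 ⟨h1, h2⟩
  exact hz this.1

theorem nb_step {α β : ℕ} {D D2 : ℕ → Prop} {Q' : QuivRel} {s' t' : ℕ → Bool}
    (h : Good Q s t) (C : Cfg Q α β D) (hout : ∀ b ∈ Q.A, Q.src b = Q.tgt α → t α = !s b)
    (hNB : ∀ a b, (a, b) ∈ Q.rel → D (Q.src a) → InTri Q a)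
    (hc : CanReflect Q (Q.tgt α))
    (R : RD Q s t (Q.tgt α) Q' s' t')
    (hz : ¬ D2 (Q.tgt α)) (hx : ¬ D2 (Q.src α)) (hsub : ∀ v ∈ Q.V, D2 v → D v) :
    ∀ a b, (a, b) ∈ Q'.rel → D2 (Q'.src a) → InTri Q' a := by
  have hα := ((h.rel _ _).1 C.rel).1
  intro a b hab ha
  have ra := (R.rel_iff h hc.1 a b).1 hab
  have haA := ((R.rel a b).1 hab).1
  have n1 : Q.tgt a ≠ Q.tgt α := by
    intro h1; rw [R.i1 a haA h1] at ha; exact hz ha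
  have n2 : Q.src a ≠ Q.tgt α := by
    intro h1
    obtain ⟨d, hd, d1, d2, d3, d4⟩ := R.o a haA h1
    have : d = α := h.ti d hd α hα d1 (by rw [d2, hout a haA h1])
    subst this
    rw [d3] at ha; exact hx ha
  have hab' : (a, b) ∈ Q.rel := by grind
  have n3 := R.n1 a haA n1 n2
  rw [n3] at ha
  exact R.inTri h hc (hNB a b hab' (hsub _ (h.mem a haA).1 ha)) n1 n2

theorem reduce : ∀ (n : ℕ) (Q : QuivRel) (s t : ℕ → Bool) (α β : ℕ) (D : ℕ → Prop),
    Good Q s t → Cfg Q α β D → (∀ a b, (a, b) ∈ Q.rel → D (Q.src a) → InTri Q a) →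
    csize Q D = n →
    ∃ Q2 s2 t2, Good Q2 s2 t2 ∧ RefEquiv Q Q2 ∧ Q2.rel.card < Q.rel.card := by
  intro n
  induction n using Nat.strong_induction_on with
  | _ n ih =>
  intro Q s t α β D h C hNB hn
  obtain ⟨hα, hβ, hαβ, hαβ'⟩ := (h.rel _ _).1 C.rel
  have hzV := (h.mem α hα).2
  have hl := h.noLoops
  have hout : ∀ b ∈ Q.A, Q.src b = Q.tgt α → (b, α) ∉ Q.rel := by
    intro b hb hbz hr
    have := hNB b α hr (by rw [hbz]; exact C.d1)
    exact C.nt ((h.inTri_iff hr).1 this)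
  have hout' : ∀ b ∈ Q.A, Q.src b = Q.tgt α → t α = !s b := by
    intro b hb hbz
    have h1 := hout b hb hbz
    apply boolne
    intro h2; exact h1 ((h.rel _ _).2 ⟨hb, hα, hbz, h2.symm⟩)
  have hc : CanReflect Q (Q.tgt α) := ⟨hzV, fun b hb hbz => ⟨α, hα, rfl, hout b hb hbz⟩⟩
  obtain ⟨Q', s', t', R⟩ := exists_RD h hc
  have h' := R.good h hc
  have hstep : RefStep Q Q' := Or.inl ⟨_, R.isReflection h hc⟩
  have relI := R.rel_iff h hc.1
  have αs := R.i1 α hα rfl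
  have αt := R.i3 α hα rfl
  -- a new configuration finishes the proof
  have fin : ∀ (π : Equiv.Perm ℕ) (α2 β2 : ℕ) (D2 : ℕ → Prop),
      (∀ a b, (a, b) ∈ Q'.rel → ∃ c, (π a, c) ∈ Q.rel) →
      Cfg Q' α2 β2 D2 → ¬ D2 (Q.tgt α) → ¬ D2 (Q.src α) → (∀ v ∈ Q.V, D2 v → D v) →
      ∃ Q2 s2 t2, Good Q2 s2 t2 ∧ RefEquiv Q Q2 ∧ Q2.rel.card < Q.rel.card := by
    intro π α2 β2 D2 hπ C2 hz hx hsub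
    have hlt : csize Q' D2 < csize Q D := csize_lt R.V hsub hzV C.d1 hz
    obtain ⟨Q2, s2, t2, g1, g2, g3⟩ := ih (csize Q' D2) (hn ▸ hlt) Q' s' t' α2 β2 D2 h' C2
      (nb_step h C hout' hNB hc R hz hx hsub) rfl
    exact ⟨Q2, s2, t2, g1, Relation.ReflTransGen.head hstep g2,
      lt_of_lt_of_le g3 (relcard_le h h' π hπ)⟩
  by_cases hA : ∃ a ∈ Q.A, Q.tgt a = Q.tgt α ∧ a ≠ α
  · obtain ⟨a, ha, haz, hne⟩ := hA
    have hta : t a = !t α := by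
      apply boolne; intro h1; exact hne (h.ti a ha α hα haz h1)
    have hin : ∀ c ∈ Q.A, Q.tgt c = Q.tgt α → c = α ∨ c = a := by
      intro c hc hcz
      by_cases h1 : t c = t α
      · left; exact h.ti c hc α hα hcz h1
      · right; exact h.ti c hc a ha (by grind) (by rw [hta]; exact boolne h1)
    have as := R.i1 a ha haz
    have at' := R.i3 a ha haz
    have nrel : ∀ c, (c, a) ∉ Q'.rel := by
      intro c hca
      obtain ⟨h1, h2, h3⟩ | ⟨h1, h2, h3, h4, h5⟩ | ⟨h1, h2, h3, c', h4, h5, h6, h7, h8⟩ :=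
        (relI c a).1 hca
      · have := ((h.rel _ _).1 h1).2.2.1
        grind
      · apply h5
        rw [h.rel]
        refine ⟨h1, ha, by grind, ?_⟩
        rw [hta, hout' c h1 h3]; simp
      · have := hl c' h4
        grind
    have nt : ¬ InTri Q' a := by
      rintro ⟨b, c, hT⟩
      exact nrel c hT.2.2.2.2.2
    obtain ⟨D2, d0, d1, dc⟩ := h'.cut (by rw [R.A]; exact ha) nt
    rw [R.A] at dc
    have hz : ¬ D2 (Q.tgt α) := by rw [as] at d0; exact d0
    have hx : ¬ D2 (Q.src α) := by
      have := dc α hα (Ne.symm hne)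
      rw [αs, αt] at this
      grind
    have hDa : D (Q.src a) := by
      have := C.dc a ha hne
      rw [haz] at this; exact this.2 C.d1
    have hsub := shrink h C hout' R h' a dc hz hx (by
      constructor
      · grind
      · rw [at']; grind)
    refine fin (Equiv.swap α a) a β D2 ?_ ⟨?_, nt, d0, d1, by rw [R.A]; exact dc⟩ hz hx hsub
    · intro a1 b1 hr
      have hr1 := (relI a1 b1).1 hr
      by_cases e1 : a1 = α
      · subst e1
        rw [Equiv.swap_apply_left]
        obtain ⟨h1, h2, h3⟩ | ⟨h1, h2, h3, h4, h5⟩ | ⟨h1, h2, h3, c', h4, h5, h6, h7, h8⟩ := hr1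
        · exact absurd rfl h2
        · exact absurd h3 (hl a1 hα)
        · obtain rfl | rfl := hin c' h4 h6
          · exact absurd rfl h5
          · exact ⟨_, h8⟩
      by_cases e2 : a1 = a
      · subst e2
        rw [Equiv.swap_apply_right]
        exact ⟨β, C.rel⟩
      rw [Equiv.swap_apply_of_ne_of_ne e1 e2]
      obtain ⟨h1, h2, h3⟩ | ⟨h1, h2, h3, h4, h5⟩ | ⟨h1, h2, h3, c', h4, h5, h6, h7, h8⟩ := hr1
      · exact ⟨_, h1⟩
      · refine ⟨a, (h.rel _ _).2 ⟨h1, ha, by grind, ?_⟩⟩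
        rw [hta, hout' a1 h1 h3]; simp
      · have := hin a1 h1 h3
        grind
    · rw [relI]
      right; right
      exact ⟨ha, hβ, haz, α, hα, hne.symm, rfl, hαβ, C.rel⟩
  · have hin : ∀ c ∈ Q.A, Q.tgt c = Q.tgt α → c = α := by
      intro c hc hcz
      by_contra h1
      exact hA ⟨c, hc, hcz, h1⟩
    have nrel : ∀ c, (α, c) ∉ Q'.rel := by
      intro c hca
      obtain ⟨h1, h2, h3⟩ | ⟨h1, h2, h3, h4, h5⟩ | ⟨h1, h2, h3, c', h4, h5, h6, h7, h8⟩ :=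
        (relI α c).1 hca
      · exact h2 rfl
      · exact hl α hα h3
      · exact h5 (hin c' h4 h6)
    by_cases hB : ∃ b ∈ Q.A, Q.src b = Q.tgt α
    · obtain ⟨b, hb, hbz⟩ := hB
      have hone : ∀ c ∈ Q.A, Q.src c = Q.tgt α → c = b := by
        intro c hc hcz
        have h1 := hout' c hc hcz
        have h2 := hout' b hb hbz
        exact h.si c hc b hb (by grind) (notinj (by rw [← h1, ← h2]))
      have hne : b ≠ α := by rintro rfl; exact hl b hb hbz
      have bs : Q'.src b = Q.src α := by
        obtain ⟨d, hd, d1, d2, d3, d4⟩ := R.o b hb hbz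
        rw [d3, hin d hd d1]
      have nt : ¬ InTri Q' b := by
        rintro ⟨a', c, hT⟩
        have : (b, α) ∈ Q'.rel := by
          rw [relI]; right; left; exact ⟨hb, hα, hbz, rfl, hout b hb hbz⟩
        have e := h'.tri_unique hT this
        subst e
        exact nrel c hT.2.2.2.2.1
      obtain ⟨D2, d0, d1, dc⟩ := h'.cut (by rw [R.A]; exact hb) nt
      rw [R.A] at dc
      have hx : ¬ D2 (Q.src α) := by rw [bs] at d0; exact d0
      have hz : ¬ D2 (Q.tgt α) := by
        have := dc α hα (Ne.symm hne)
        rw [αs, αt] at this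
        grind
      have hsub := shrink h C hout' R h' b dc hz hx (by
        have hDb := C.dc b hb hne
        have := C.d1
        have tc := R.tgtCases h hb
        constructor
        · grind
        · grind)
      refine fin (Equiv.swap α b) b α D2 ?_ ⟨?_, nt, d0, d1, by rw [R.A]; exact dc⟩ hz hx hsub
      · intro a1 b1 hr
        have hr1 := (relI a1 b1).1 hr
        by_cases e1 : a1 = α
        · subst e1
          exact absurd hr (nrel _)
        by_cases e2 : a1 = b
        · subst e2
          rw [Equiv.swap_apply_right]
          exact ⟨β, C.rel⟩
        rw [Equiv.swap_apply_of_ne_of_ne e1 e2]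
        obtain ⟨h1, h2, h3⟩ | ⟨h1, h2, h3, h4, h5⟩ | ⟨h1, h2, h3, c', h4, h5, h6, h7, h8⟩ := hr1
        · exact ⟨_, h1⟩
        · exact absurd (hone a1 h1 h3) e2
        · exact absurd (hin a1 h1 h3) e1
      · rw [relI]; right; left; exact ⟨hb, hα, hbz, rfl, hout b hb hbz⟩
    · refine ⟨Q', s', t', h', Relation.ReflTransGen.single hstep, ?_⟩
      apply Finset.card_lt_card
      rw [Finset.ssubset_iff_of_subset]
      · exact ⟨_, C.rel, nrel β⟩
      · rintro ⟨a1, b1⟩ hr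
        obtain ⟨h1, h2, h3⟩ | ⟨h1, h2, h3, h4, h5⟩ | ⟨h1, h2, h3, c', h4, h5, h6, h7, h8⟩ :=
          (relI a1 b1).1 hr
        · exact h1
        · exact absurd ⟨a1, h1, h3⟩ hB
        · have := hin a1 h1 h3
          subst this
          exact absurd hr (nrel _)

end

section
variable {Q : QuivRel} {s t : ℕ → Bool}

theorem op_op (Q : QuivRel) : opQR (opQR Q) = Q := by
  cases Q with
  | mk V A src tgt rel =>
    simp only [opQR, Finset.image_image, QuivRel.mk.injEq, true_and]
    have : ((fun ρ : ℕ × ℕ => (ρ.2, ρ.1)) ∘ fun ρ : ℕ × ℕ => (ρ.2, ρ.1)) = id := by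
      funext ⟨a, b⟩; rfl
    rw [this, Finset.image_id]

theorem op_rel (Q : QuivRel) (a b : ℕ) : (a, b) ∈ (opQR Q).rel ↔ (b, a) ∈ Q.rel := by
  simp [opQR]

theorem op_card (Q : QuivRel) : (opQR Q).rel.card = Q.rel.card := by
  apply Finset.card_image_of_injective
  rintro ⟨a, b⟩ ⟨c, d⟩ h
  simp at h; simp [h]

theorem op_tri (Q : QuivRel) (a b c : ℕ) : Tri (opQR Q) a b c ↔ Tri Q c b a := by
  simp only [Tri, op_rel]; grind

theorem op_inTri (Q : QuivRel) (a : ℕ) : InTri (opQR Q) a ↔ InTri Q a := by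
  constructor
  · rintro ⟨b, c, h⟩; exact ⟨_, _, ((op_tri _ _ _ _).1 h).rot.rot⟩
  · rintro ⟨b, c, h⟩; exact ⟨_, _, (op_tri _ _ _ _).2 h.rot⟩

theorem Good.op (h : Good Q s t) : Good (opQR Q) t s where
  ne := h.ne
  mem := fun a ha => (h.mem a ha).symm
  conn := fun X hX => h.conn X (fun a ha => (hX a ha).symm)
  rel := by
    intro a b
    rw [op_rel, h.rel]
    simp only [opQR]
    grind
  si := h.ti
  ti := h.si
  rank := by
    obtain ⟨r, hr⟩ := h.rank
    refine ⟨fun a => Q.A.sup r - r a, ?_⟩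
    intro a ha b hb h1 h2
    have := hr b hb a ha h1.symm (Ne.symm h2)
    have h5 : r b ≤ Q.A.sup r := Finset.le_sup hb
    simp only
    omega
  h1 := by
    intro g hg
    obtain ⟨f, hf⟩ := h.h1 g (by
      intro a b c hT
      have := hg c b a ((op_tri _ _ _ _).2 hT)
      rw [← this]; ring)
    refine ⟨f, fun a ha => ?_⟩
    rw [← hf a ha, add_comm]; rfl

theorem RefStep.op {Q Q' : QuivRel} (h : RefStep Q Q') : RefStep (opQR Q) (opQR Q') := by
  rcases h with ⟨x, h⟩ | ⟨x, h⟩ | ⟨fV, fA, h1, h2, h3, h4⟩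
  · right; left
    refine ⟨x, ?_⟩
    unfold IsCoreflection
    rwa [op_op, op_op]
  · left; exact ⟨x, h⟩
  · right; right
    refine ⟨fV, fA, h1, h2, fun a ha => (h3 a ha).symm, ?_⟩
    intro a ha b hb
    rw [op_rel, op_rel]
    exact h4 b hb a ha

theorem RefEquiv.op {Q Q' : QuivRel} (h : RefEquiv Q Q') : RefEquiv (opQR Q) (opQR Q') := by
  unfold RefEquiv at *
  induction h with
  | refl => exact .refl
  | tail _ h ih => exact ih.tail h.op

theorem Good.exists_cfg (h : Good Q s t) {a b : ℕ} (hr : (a, b) ∈ Q.rel) (hn : ¬ InTri Q a) :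
    ∃ D, Cfg Q a b D := by
  obtain ⟨D, h1, h2, h3⟩ := h.cut ((h.rel a b).1 hr).1 hn
  exact ⟨D, hr, hn, h1, h2, h3⟩

theorem cut_lt (h : Good Q s t) {α β a : ℕ} {D f : ℕ → Prop} (hC : Cfg Q α β D) {w : ℕ}
    (hw : w ∈ Q.V) (hDw : D w) (ha : a ∈ Q.A) (hwa : w = Q.src a ∨ w = Q.tgt a) (hne : a ≠ α)
    (hfw : ¬ f w) (hfc : ∀ e ∈ Q.A, e ≠ a → (f (Q.src e) ↔ f (Q.tgt e)))
    (hfx : ¬ f (Q.src α)) : csize Q f < csize Q D := by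
  have hα := ((h.rel _ _).1 hC.rel).1
  have d0 := hC.d0
  have d1 := hC.d1
  refine csize_lt rfl ?_ hw hDw hfw
  intro v hv hfv
  by_contra hDv
  have := h.conn (fun v => f v ∧ ¬ D v) (by
    intro e he
    have q1 := hC.dc e he
    have q2 := hfc e he
    by_cases e1 : e = α
    · subst e1; grind
    · by_cases e2 : e = a
      · subst e2
        have := q1 e1
        rcases hwa with rfl | rfl <;> grind
      · grind) v hv (Q.src α) (h.mem α hα).1 ⟨hfv, hDv⟩
  exact hfx this.1

theorem minimal_nb (h : Good Q s t) {α β : ℕ} {D : ℕ → Prop} (hC : Cfg Q α β D)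
    (m1 : ∀ a b f, Cfg Q a b f → csize Q D ≤ csize Q f)
    (m2 : ∀ a b f, Cfg (opQR Q) a b f → csize Q D ≤ csize Q f) :
    ∀ a b, (a, b) ∈ Q.rel → D (Q.src a) → InTri Q a := by
  intro a b hr hD
  by_contra hn
  have hab := (h.rel a b).1 hr
  have hα := ((h.rel _ _).1 hC.rel).1
  obtain ⟨f1, c1⟩ := h.exists_cfg hr hn
  have hnb : ¬ InTri (opQR Q) b := by rwa [op_inTri, ← h.inTri_iff hr]
  obtain ⟨f2, c2⟩ := h.op.exists_cfg ((op_rel Q b a).2 hr) hnb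
  have e1 : a ≠ α := by rintro rfl; exact hC.d0 hD
  have hw := (h.mem a hab.1).1
  have k1 : f1 (Q.src α) := by
    by_contra hx
    have := cut_lt h hC hw hD hab.1 (Or.inl rfl) e1 c1.d0 c1.dc hx
    have := m1 _ _ _ c1
    omega
  have d2 : ¬ f2 (Q.src a) := by rw [hab.2.2.1]; exact c2.d0
  have dc2 : ∀ e ∈ Q.A, e ≠ b → (f2 (Q.src e) ↔ f2 (Q.tgt e)) := fun e he hn => (c2.dc e he hn).symm
  by_cases e2 : b = α
  · subst e2
    have := c1.dc b hα (Ne.symm e1)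
    have := c1.d0
    rw [hab.2.2.1] at this
    tauto
  have k2 : f2 (Q.src α) := by
    by_contra hx
    have := cut_lt h hC hw hD hab.2.1 (Or.inr hab.2.2.1) e2 d2 dc2 hx
    have := m2 _ _ _ c2
    omega
  have d1 := c1.d0
  have := h.conn (fun v => f1 v ∧ f2 v) (by
    intro e he
    have q1 := c1.dc e he
    have q2 := dc2 e he
    have hl := h.noLoops a hab.1
    by_cases e1 : e = a
    · subst e1
      by_cases e2 : e = b
      · subst e2; exact absurd hab.2.2.1 hl
      · grind
    · by_cases e2 : e = b
      · subst e2; rw [hab.2.2.1] at d1 d2; grind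
      · grind) _ (h.mem α hα).1 _ hw ⟨k1, k2⟩
  exact d1 this.1

theorem step_down (h : Good Q s t) {a b : ℕ} (hr : (a, b) ∈ Q.rel) (hn : ¬ InTri Q a) :
    ∃ Q2 s2 t2, Good Q2 s2 t2 ∧ RefEquiv Q Q2 ∧ Q2.rel.card < Q.rel.card := by
  classical
  obtain ⟨D0, c0⟩ := h.exists_cfg hr hn
  have hex : ∃ n, ∃ a b f, (Cfg Q a b f ∨ Cfg (opQR Q) a b f) ∧ csize Q f = n :=
    ⟨_, a, b, D0, Or.inl c0, rfl⟩
  obtain ⟨α, β, D, hC, hD⟩ := Nat.find_spec hex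
  have hmin : ∀ a b f, (Cfg Q a b f ∨ Cfg (opQR Q) a b f) → csize Q D ≤ csize Q f := by
    intro a b f hf
    rw [hD]
    exact Nat.find_min' hex ⟨a, b, f, hf, rfl⟩
  rcases hC with hC | hC
  · exact reduce _ Q s t α β D h hC (minimal_nb h hC (fun a b f c => hmin a b f (Or.inl c))
      (fun a b f c => hmin a b f (Or.inr c))) rfl
  · obtain ⟨Q2, s2, t2, g1, g2, g3⟩ := reduce _ (opQR Q) t s α β D h.op hC
      (minimal_nb h.op hC (fun a b f c => hmin a b f (Or.inr c))
      (fun a b f c => hmin a b f (Or.inl (by rwa [op_op] at c)))) rfl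
    refine ⟨opQR Q2, t2, s2, g1.op, ?_, ?_⟩
    · have := g2.op
      rwa [op_op] at this
    · rw [op_card]; rwa [op_card] at g3

theorem descend : ∀ n : ℕ, ∀ Q s t, Good Q s t → Q.rel.card = n →
    ∃ Q2 s2 t2, Good Q2 s2 t2 ∧ RefEquiv Q Q2 ∧ ∀ a b, (a, b) ∈ Q2.rel → InTri Q2 a := by
  intro n
  induction n using Nat.strong_induction_on with
  | _ n ih =>
    intro Q s t h hn
    by_cases hall : ∀ a b, (a, b) ∈ Q.rel → InTri Q a
    · exact ⟨Q, s, t, h, .refl, hall⟩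
    · push Not at hall
      obtain ⟨a, b, hr, hT⟩ := hall
      obtain ⟨Q2, s2, t2, g1, g2, g3⟩ := step_down h hr hT
      obtain ⟨Q3, s3, t3, k1, k2, k3⟩ := ih _ (hn ▸ g3) Q2 s2 t2 g1 rfl
      exact ⟨Q3, s3, t3, k1, Relation.ReflTransGen.trans g2 k2, k3⟩

theorem Good.not_branch (h : Good Q s t) {a : ℕ} (hT : InTri Q a) : ¬ BranchArrow Q a := by
  rintro ⟨ha, hb⟩
  apply hb
  rw [connected_iff _ (by
    intro e he
    simp only [deleteArrows, Finset.mem_sdiff] at he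
    exact h.mem e he.1)]
  intro X hX
  apply h.conn X
  intro e he
  by_cases e1 : e = a
  · subst e1
    obtain ⟨b, c, hT⟩ := hT
    have r1 := (h.rel _ _).1 hT.2.2.2.1
    have r2 := (h.rel _ _).1 hT.2.2.2.2.1
    have r3 := (h.rel _ _).1 hT.2.2.2.2.2
    have x1 := hX b (by simp [deleteArrows, r1.2.1, hT.1.symm])
    have x2 := hX c (by simp [deleteArrows, r3.1, hT.2.2.1.symm])
    simp only [deleteArrows] at x1 x2
    rw [r1.2.2.1, ← r3.2.2.1]
    rw [r2.2.2.1] at x1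
    tauto
  · exact hX e (by simp [deleteArrows, he, e1])

theorem final_of_good (h : Good Q s t) : ∃ Q' : QuivRel, IsGentle Q' ∧
    (∀ ρ : ℕ × ℕ, ¬ BranchRel Q' ρ) ∧ RefEquiv Q Q' := by
  obtain ⟨Q2, s2, t2, g1, g2, g3⟩ := descend _ Q s t h rfl
  refine ⟨Q2, g1.gentle, ?_, g2⟩
  rintro ⟨a, b⟩ ⟨hr, hb⟩
  have h1 := g3 a b hr
  rcases hb with hb | hb
  · exact g1.not_branch h1 hb
  · exact g1.not_branch ((g1.inTri_iff hr).1 h1) hb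
end

section

theorem chain_pred (R : ℕ → ℕ → Prop) : ∀ (l : List ℕ) (a b : ℕ), List.IsChain R (a :: l) →
    b ∈ a :: l → b = a ∨ ∃ c ∈ a :: l, R c b := by
  intro l
  induction l with
  | nil => intro a b _ hb; simp at hb; exact Or.inl hb
  | cons x l ih =>
    intro a b h hb
    rw [List.isChain_cons_cons] at h
    rcases List.mem_cons.1 hb with rfl | hb
    · exact Or.inl rfl
    · right
      rcases ih x b h.2 hb with rfl | ⟨c, hc, hcb⟩
      · exact ⟨a, by simp, h.1⟩
      · exact ⟨c, List.mem_cons_of_mem _ hc, hcb⟩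

theorem chain_succ (R : ℕ → ℕ → Prop) : ∀ (l : List ℕ) (a b : ℕ), List.IsChain R (a :: l) →
    b ∈ a :: l → b = (a :: l).getLast! ∨ ∃ c ∈ a :: l, R b c := by
  intro l
  induction l with
  | nil => intro a b _ hb; simp at hb; exact Or.inl hb
  | cons x l ih =>
    intro a b h hb
    rw [List.isChain_cons_cons] at h
    rcases List.mem_cons.1 hb with rfl | hb
    · exact Or.inr ⟨x, by simp, h.1⟩
    · rcases ih x b h.2 hb with h1 | ⟨c, hc, hcb⟩
      · left; exact h1
      · right; exact ⟨c, List.mem_cons_of_mem _ hc, hcb⟩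

theorem chain_uniq (R : ℕ → ℕ → Prop) (hR : ∀ a b c, R a b → R a c → b = c) :
    ∀ (l l' : List ℕ) (a : ℕ), List.IsChain R (a :: l) → List.IsChain R (a :: l') →
    (∀ b, ¬ R (a :: l).getLast! b) → (∀ b, ¬ R (a :: l').getLast! b) → l = l' := by
  intro l
  induction l with
  | nil =>
    intro l' a _ h2 h3 _
    cases l' with
    | nil => rfl
    | cons x l' =>
      rw [List.isChain_cons_cons] at h2
      exact absurd h2.1 (h3 x)
  | cons x l ih =>
    intro l' a h1 h2 h3 h4
    cases l' with
    | nil =>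
      rw [List.isChain_cons_cons] at h1
      exact absurd h1.1 (h4 x)
    | cons y l' =>
      rw [List.isChain_cons_cons] at h1 h2
      obtain rfl := hR _ _ _ h1.1 h2.1
      rw [ih l' x h1.2 h2.2 h3 h4]

variable {Q : QuivRel} (st : SigmaTau Q)

theorem relI (hG : IsGentle Q) (a b : ℕ) :
    (a, b) ∈ Q.rel ↔ a ∈ Q.A ∧ b ∈ Q.A ∧ Q.src a = Q.tgt b ∧ st.σ a = st.τ b := by
  constructor
  · intro h
    obtain ⟨h1, h2, h3⟩ := hG.2.2.2.1 _ h
    exact ⟨h1, h2, h3, (st.rel_iff a h1 b h2 h3).1 h⟩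
  · rintro ⟨h1, h2, h3, h4⟩
    exact (st.rel_iff a h1 b h2 h3).2 h4

theorem sI {a b : ℕ} (ha : a ∈ Q.A) (hb : b ∈ Q.A) (h : Q.src a = Q.src b)
    (h' : st.σ a = st.σ b) : a = b := by
  by_contra hn
  have := st.σ_src a ha b hb hn h
  have := st.σ_pm a ha
  omega

theorem tI {a b : ℕ} (ha : a ∈ Q.A) (hb : b ∈ Q.A) (h : Q.tgt a = Q.tgt b)
    (h' : st.τ a = st.τ b) : a = b := by
  by_contra hn
  have := st.τ_tgt a ha b hb hn h
  have := st.τ_pm a ha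
  omega

/-- unpacked form of membership in the set of maximal antipaths -/
theorem inN_cons (hG : IsGentle Q) (a : ℕ) (l : List ℕ) : InN Q st (.arrows (a :: l)) ↔
    (∀ x ∈ a :: l, x ∈ Q.A) ∧ List.IsChain (fun a b => (a, b) ∈ Q.rel) (a :: l) ∧
    (∀ c, (c, a) ∉ Q.rel) ∧ (∀ c, ((a :: l).getLast!, c) ∉ Q.rel) := by
  constructor
  · rintro ⟨⟨-, h1, h2⟩, h3, h4⟩
    refine ⟨h1, h2, ?_, ?_⟩
    · intro c hc
      have := (relI st hG _ _).1 hc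
      exact h3 ⟨c, this.1, this.2.2.1, this.2.2.2⟩
    · intro c hc
      have := (relI st hG _ _).1 hc
      exact h4 ⟨c, this.2.1, this.2.2.1.symm, this.2.2.2.symm⟩
  · rintro ⟨h1, h2, h3, h4⟩
    refine ⟨⟨by simp, h1, h2⟩, ?_, ?_⟩
    · rintro ⟨c, hc, k1, k2⟩
      exact h3 c ((relI st hG _ _).2 ⟨hc, h1 a (by simp), k1, k2⟩)
    · rintro ⟨c, hc, k1, k2⟩
      have hl : (a :: l).getLast! ∈ a :: l := List.getLast_mem (by simp)
      exact h4 c ((relI st hG _ _).2 ⟨h1 _ hl, hc, k1.symm, k2.symm⟩)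

theorem inN_inj (hG : IsGentle Q) : Set.InjOn
    (fun w : Thread => (w.target Q, w.tauAnti st)) {w | InN Q st w} := by
  have hR : ∀ a b c, (a, b) ∈ Q.rel → (a, c) ∈ Q.rel → b = c := by
    intro a b c h1 h2
    have h1 := (relI st hG _ _).1 h1
    have h2 := (relI st hG _ _).1 h2
    exact tI st h1.2.1 h2.2.1 (by grind) (by grind)
  have key : ∀ x ε a l, InN Q st (.triv x ε) → InN Q st (.arrows (a :: l)) → Q.tgt a = x →
      st.τ a = ε → False := by
    intro x ε a l h1 h2 h3 h4
    exact h1.2.2 ⟨a, ((inN_cons st hG _ _).1 h2).1 a (by simp), h3, h4⟩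
  intro w hw w' hw' h
  simp only [Prod.mk.injEq] at h
  have nil : ¬ InN Q st (.arrows []) := fun h => h.1.1 rfl
  cases w with
  | triv x ε =>
    cases w' with
    | triv y δ => simp [Thread.target, Thread.tauAnti] at h; simp [h]
    | arrows l =>
      cases l with
      | nil => exact absurd hw' nil
      | cons a l => exact (key x ε a l hw hw' h.1.symm h.2.symm).elim
  | arrows l =>
    cases l with
    | nil => exact absurd hw nil
    | cons a l =>
      cases w' with
      | triv y δ => exact (key _ _ a l hw' hw h.1 h.2).elim
      | arrows l' =>
        cases l' with
        | nil => exact absurd hw' nil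
        | cons b l' =>
          have h1 := (inN_cons st hG _ _).1 hw
          have h2 := (inN_cons st hG _ _).1 hw'
          obtain rfl : a = b := tI st (h1.1 a (by simp)) (h2.1 b (by simp)) h.1 h.2
          rw [chain_uniq _ hR l l' a h1.2.1 h2.2.1 h1.2.2.2 h2.2.2.2]

theorem inN_maps (hG : IsGentle Q) (w : Thread) (hw : InN Q st w) :
    (w.target Q, w.tauAnti st) ∈
      (Q.V ×ˢ ({1, -1} : Finset ℤ)) \ Q.A.image (fun a => (Q.src a, st.σ a)) := by
  simp only [Finset.mem_sdiff, Finset.mem_product, Finset.mem_image, Prod.mk.injEq]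
  refine ⟨?_, fun ⟨a, ha, h1, h2⟩ => hw.2.1 ⟨a, ha, h1, h2⟩⟩
  cases w with
  | triv x ε => simpa [Thread.target, Thread.tauAnti, IsAntiThread] using hw.1
  | arrows l =>
    cases l with
    | nil => exact absurd rfl hw.1.1
    | cons a l =>
      have ha := hw.1.2.1 a (by simp)
      simpa using ⟨(hG.2.1 a ha).2, st.τ_pm a ha⟩

theorem inN_finite (hG : IsGentle Q) : {w | InN Q st w}.Finite :=
  Set.Finite.of_finite_image
    (((Q.V ×ˢ ({1, -1} : Finset ℤ)) \ Q.A.image (fun a => (Q.src a, st.σ a))).finite_toSet.subset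
      (by rintro _ ⟨w, hw, rfl⟩; exact inN_maps st hG w hw)) (inN_inj st hG)

theorem inN_card (hG : IsGentle Q) : {w | InN Q st w}.ncard + Q.A.card ≤ 2 * Q.V.card := by
  have h1 := Set.ncard_le_ncard_of_injOn (s := {w | InN Q st w})
    (t := (((Q.V ×ˢ ({1, -1} : Finset ℤ)) \ Q.A.image (fun a => (Q.src a, st.σ a)) : Finset _) :
      Set (ℕ × ℤ))) _ (inN_maps st hG) (inN_inj st hG) (Finset.finite_toSet _)
  rw [Set.ncard_coe_finset, Finset.card_sdiff_of_subset, Finset.card_image_of_injOn,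
    Finset.card_product] at h1
  · have h2 : Q.A.card ≤ Q.V.card * 2 := by
      rw [← Finset.card_image_of_injOn (s := Q.A) (f := fun a => (Q.src a, st.σ a)) (by
        intro a ha b hb h; simp at h; exact sI st ha hb h.1 h.2)]
      refine (Finset.card_le_card (t := Q.V ×ˢ ({1, -1} : Finset ℤ)) ?_).trans
        (by rw [Finset.card_product]; rfl)
      intro x hx
      simp at hx
      obtain ⟨a, ha, rfl⟩ := hx
      simpa using ⟨(hG.2.1 a ha).1, st.σ_pm a ha⟩
    have : ({1, -1} : Finset ℤ).card = 2 := rfl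
    rw [this] at h1
    omega
  · intro a ha b hb h; simp at h; exact sI st ha hb h.1 h.2
  · intro x hx
    simp at hx
    obtain ⟨a, ha, rfl⟩ := hx
    simpa using ⟨(hG.2.1 a ha).1, st.σ_pm a ha⟩

theorem eqv_inv {α : Type*} {r : α → α → Prop} {X : α → Prop} (h : ∀ a b, r a b → (X a ↔ X b))
    {a b : α} (hab : Relation.EqvGen r a b) : X a ↔ X b := by
  induction hab with
  | rel _ _ h' => exact h _ _ h'
  | refl => rfl
  | symm _ _ _ ih => exact ih.symm
  | trans _ _ _ _ _ ih1 ih2 => exact ih1.trans ih2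

theorem NOrbit.sub {O : Set Thread} (h : NOrbit Q st O) : O ⊆ {w | InN Q st w} := by
  obtain ⟨w, hw, rfl⟩ := h
  intro w' hw'
  exact (eqv_inv (X := fun w => InN Q st w) (fun a b h => iff_of_true h.1 h.2.1) hw').1 hw

theorem COrbit.sub {O : Set ℕ} (h : COrbit Q st O) : O ⊆ {a | InC Q st a} := by
  obtain ⟨w, hw, rfl⟩ := h
  intro w' hw'
  exact (eqv_inv (X := fun w => InC Q st w) (fun a b h => iff_of_true h.1 h.2.1) hw').1 hw

theorem COrbit.full {O : Set ℕ} (h : COrbit Q st O) (X : ℕ → Prop)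
    (hX : ∀ a b, PsiRel Q st a b → (X a ↔ X b)) {x y : ℕ} (hx : x ∈ O) (hy : y ∈ O)
    (hXx : X x) : X y := by
  obtain ⟨w, hw, rfl⟩ := h
  exact (eqv_inv hX hy).1 ((eqv_inv hX hx).2 hXx)

theorem COrbit.disj {O O' : Set ℕ} (h : COrbit Q st O) (h' : COrbit Q st O') {x : ℕ}
    (hx : x ∈ O) (hx' : x ∈ O') : O = O' := by
  obtain ⟨w, hw, rfl⟩ := h
  obtain ⟨w', hw', rfl⟩ := h'
  have : Relation.EqvGen (PsiRel Q st) w w' := .trans _ _ _ hx (.symm _ _ hx')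
  ext y
  exact ⟨fun h => .trans _ _ _ (.symm _ _ this) h, fun h => .trans _ _ _ this h⟩

theorem inC_succ (hG : IsGentle Q) {a b : ℕ} (h : InC Q st a) (hr : (a, b) ∈ Q.rel) :
    InC Q st b := by
  have hab := (relI st hG _ _).1 hr
  refine ⟨hab.2.1, ?_⟩
  rintro ⟨l, hl, hb⟩
  cases l with
  | nil => simp at hb
  | cons x l =>
    have hN := (inN_cons st hG _ _).1 hl
    rcases chain_pred _ l x b hN.2.1 hb with rfl | ⟨c, hc, hcb⟩
    · exact hN.2.2.1 _ hr
    · have := (relI st hG _ _).1 hcb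
      obtain rfl : c = a := sI st this.1 hab.1 (by grind) (by grind)
      exact h.2 ⟨_, hl, hc⟩

theorem inC_pred (hG : IsGentle Q) {a b : ℕ} (h : InC Q st b) (hr : (a, b) ∈ Q.rel) :
    InC Q st a := by
  have hab := (relI st hG _ _).1 hr
  refine ⟨hab.1, ?_⟩
  rintro ⟨l, hl, hb⟩
  cases l with
  | nil => simp at hb
  | cons x l =>
    have hN := (inN_cons st hG _ _).1 hl
    rcases chain_succ _ l x a hN.2.1 hb with h1 | ⟨c, hc, hcb⟩
    · exact hN.2.2.2 _ (h1 ▸ hr)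
    · have := (relI st hG _ _).1 hcb
      obtain rfl : c = b := tI st this.2.1 hab.2.1 (by grind) (by grind)
      exact h.2 ⟨_, hl, hc⟩

theorem COrbit.edge (hG : IsGentle Q) {O : Set ℕ} (h : COrbit Q st O) {a b : ℕ}
    (hr : (a, b) ∈ Q.rel) : a ∈ O ↔ b ∈ O := by
  have hab := (relI st hG _ _).1 hr
  have key : InC Q st a → InC Q st b → (a ∈ O ↔ b ∈ O) := by
    intro h1 h2
    obtain ⟨w, hw, rfl⟩ := h
    have hp : PsiRel Q st a b := ⟨h1, h2, hab.2.2.1.symm, hab.2.2.2.symm⟩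
    exact ⟨fun h => .trans _ _ _ h (.rel _ _ hp), fun h => .trans _ _ _ h (.symm _ _ (.rel _ _ hp))⟩
  constructor
  · intro ha
    exact (key (h.sub st ha) (inC_succ st hG (h.sub st ha) hr)).1 ha
  · intro hb
    exact (key (inC_pred st hG (h.sub st hb) hr) (h.sub st hb)).2 hb

theorem COrbit.exists_succ (hG : IsGentle Q) {O : Set ℕ} (h : COrbit Q st O)
    (h3 : O.ncard = 3) {x : ℕ} (hx : x ∈ O) : ∃ y ∈ O, (x, y) ∈ Q.rel := by
  by_contra hno
  have hno : ∀ y, (x, y) ∉ Q.rel := fun y hy => hno ⟨y, (h.edge st hG hy).1 hx, hy⟩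
  have hs : ∀ a b c, (a, b) ∈ Q.rel → (a, c) ∈ Q.rel → b = c := by
    intro a b c h1 h2
    have h1 := (relI st hG _ _).1 h1
    have h2 := (relI st hG _ _).1 h2
    exact tI st h1.2.1 h2.2.1 (by grind) (by grind)
  have hC := fun a (ha : a ∈ O) => h.sub st ha
  have hA := fun a (ha : a ∈ O) => (h.sub st ha).1
  have p1 : ∃ y, (y, x) ∈ Q.rel := by
    by_contra hn
    push Not at hn
    refine (hC x hx).2 ⟨[x], (inN_cons st hG _ _).2 ⟨?_, ?_, hn, hno⟩, by simp⟩
    · simpa using hA x hx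
    · simp
  obtain ⟨y, hy⟩ := p1
  have yO := (h.edge st hG hy).2 hx
  have p2 : ∃ z, (z, y) ∈ Q.rel := by
    by_contra hn
    push Not at hn
    refine (hC x hx).2 ⟨[y, x], (inN_cons st hG _ _).2 ⟨?_, ?_, hn, hno⟩, by simp⟩
    · simpa using ⟨hA y yO, hA x hx⟩
    · simpa using hy
  obtain ⟨z, hz⟩ := p2
  have zO := (h.edge st hG hz).2 yO
  have p3 : ∃ u, (u, z) ∈ Q.rel := by
    by_contra hn
    push Not at hn
    refine (hC x hx).2 ⟨[z, y, x], (inN_cons st hG _ _).2 ⟨?_, ?_, hn, hno⟩, by simp⟩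
    · simpa using ⟨hA z zO, hA y yO, hA x hx⟩
    · simpa using ⟨hz, hy⟩
  obtain ⟨u, hu⟩ := p3
  have uO := (h.edge st hG hu).2 zO
  have nyx : y ≠ x := by rintro rfl; exact hno _ hy
  have nzx : z ≠ x := by rintro rfl; exact hno _ hz
  have nux : u ≠ x := by rintro rfl; exact hno _ hu
  have nzy : z ≠ y := by rintro rfl; exact nyx (hs _ _ _ hz hy)
  have nuy : u ≠ y := by rintro rfl; exact nzx (hs _ _ _ hu hy)
  have nuz : u ≠ z := by rintro rfl; exact nzy (hs _ _ _ hu hz)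
  have hfin : O.Finite := Set.finite_of_ncard_ne_zero (by omega)
  have hsub : (({x, y, z, u} : Finset ℕ) : Set ℕ) ⊆ O := by
    intro v hv
    simp at hv
    rcases hv with rfl | rfl | rfl | rfl <;> assumption
  have hle := Set.ncard_le_ncard hsub hfin
  rw [Set.ncard_coe_finset, h3] at hle
  have : ({x, y, z, u} : Finset ℕ).card = 4 := by
    rw [Finset.card_eq_of_equiv_fin]
    exact Finset.equivFinOfCardEq (by grind)
  omega

theorem COrbit.tri (hG : IsGentle Q) {O : Set ℕ} (h : COrbit Q st O)
    (h3 : O.ncard = 3) : ∃ x y z, Tri Q x y z ∧ O = (({x, y, z} : Finset ℕ) : Set ℕ) := by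
  have hfin : O.Finite := Set.finite_of_ncard_ne_zero (by omega)
  have hp : ∀ a b c, (b, a) ∈ Q.rel → (c, a) ∈ Q.rel → b = c := by
    intro a b c h1 h2
    have h1 := (relI st hG _ _).1 h1
    have h2 := (relI st hG _ _).1 h2
    exact sI st h1.1 h2.1 (by grind) (by grind)
  have hs : ∀ a b c, (a, b) ∈ Q.rel → (a, c) ∈ Q.rel → b = c := by
    intro a b c h1 h2
    have h1 := (relI st hG _ _).1 h1
    have h2 := (relI st hG _ _).1 h2
    exact tI st h1.2.1 h2.2.1 (by grind) (by grind)
  have hpsi : ∀ a b, PsiRel Q st a b → (a, b) ∈ Q.rel := by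
    rintro a b ⟨h1, h2, h3, h4⟩
    exact (relI st hG _ _).2 ⟨h1.1, h2.1, h3.symm, h4.symm⟩
  obtain ⟨x, hx⟩ : O.Nonempty := by
    rw [← Set.ncard_pos hfin]; omega
  obtain ⟨y, hy, hxy⟩ := h.exists_succ st hG h3 hx
  obtain ⟨z, hz, hyz⟩ := h.exists_succ st hG h3 hy
  obtain ⟨u, hu, hzu⟩ := h.exists_succ st hG h3 hz
  have small : ∀ S : Finset ℕ, S.card ≤ 2 → x ∈ S →
      (∀ a b, (a, b) ∈ Q.rel → (a ∈ S ↔ b ∈ S)) → False := by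
    intro S hS hxS hinv
    have : O ⊆ (S : Set ℕ) := fun v hv =>
      h.full st (fun v => v ∈ S) (fun a b hab => hinv a b (hpsi a b hab)) hx hv hxS
    have := Set.ncard_le_ncard this (Finset.finite_toSet _)
    rw [Set.ncard_coe_finset] at this
    omega
  have n1 : x ≠ y := by
    rintro rfl
    refine small {x} (by simp) (by simp) ?_
    intro a b hab
    simp only [Finset.mem_singleton]
    grind
  have n2 : y ≠ z := by
    rintro rfl; exact n1 (hp _ _ _ hxy hyz)
  have n3 : x ≠ z := by
    rintro rfl
    refine small {x, y} (Finset.card_le_two) (by simp) ?_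
    intro a b hab
    simp only [Finset.mem_singleton, Finset.mem_insert]
    grind
  have hsub : (({x, y, z} : Finset ℕ) : Set ℕ) ⊆ O := by
    intro v hv
    simp at hv
    rcases hv with rfl | rfl | rfl <;> assumption
  have hc : ({x, y, z} : Finset ℕ).card = 3 := by
    rw [Finset.card_eq_three]; exact ⟨x, y, z, n1, n3, n2, rfl⟩
  have heq := Set.eq_of_subset_of_ncard_le hsub (by rw [Set.ncard_coe_finset]; omega) hfin
  have : u ∈ (({x, y, z} : Finset ℕ) : Set ℕ) := heq ▸ hu
  simp at this
  have hux : u = x := by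
    rcases this with rfl | rfl | rfl
    · rfl
    · exact absurd (hp _ _ _ hxy hzu) n3
    · exact absurd (hp _ _ _ hyz hzu) n2
  subst hux
  exact ⟨u, y, z, ⟨n1, n2, n3, hxy, hyz, hzu⟩, heq.symm⟩
end

section

theorem z2eq : ∀ x y : ZMod 2, x + y = 0 → x = y := by decide
theorem z2two : (1 : ZMod 2) + 1 = 0 := by decide

theorem h1_abs (V A : Finset ℕ) (src tgt : ℕ → ℕ) (hV : V.Nonempty)
    (mem : ∀ a ∈ A, src a ∈ V ∧ tgt a ∈ V)
    (conn : ∀ X : ℕ → Prop, (∀ a ∈ A, (X (src a) ↔ X (tgt a))) →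
      ∀ x ∈ V, ∀ y ∈ V, X x → X y)
    (T : Finset (Finset ℕ)) (hsub : ∀ O ∈ T, O ⊆ A) (hne : ∀ O ∈ T, O.Nonempty)
    (disj : ∀ O ∈ T, ∀ O' ∈ T, ∀ a, a ∈ O → a ∈ O' → O = O')
    (hcard : A.card + 1 ≤ V.card + T.card)
    (hz : ∀ f : ℕ → ZMod 2, ∀ O ∈ T, ∑ a ∈ O, (f (src a) + f (tgt a)) = 0)
    (g : ℕ → ZMod 2) (hg : ∀ O ∈ T, ∑ a ∈ O, g a = 0) :
    ∃ f : ℕ → ZMod 2, ∀ a ∈ A, f (src a) + f (tgt a) = g a := by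
  classical
  let d : (V → ZMod 2) →ₗ[ZMod 2] (A → ZMod 2) :=
    { toFun := fun f a => f ⟨src a, (mem a a.2).1⟩ + f ⟨tgt a, (mem a a.2).2⟩
      map_add' := by intro f f'; funext a; simp; ring
      map_smul' := by intro c f; funext a; simp; ring }
  let B : (A → ZMod 2) →ₗ[ZMod 2] (T → ZMod 2) :=
    { toFun := fun g O => ∑ a ∈ O.1.attach, g ⟨a, hsub O O.2 a.2⟩
      map_add' := by intro f f'; funext a; simp [Finset.sum_add_distrib]
      map_smul' := by intro c f; funext a; simp [Finset.mul_sum] }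
  have hBd : ∀ (g : ℕ → ZMod 2) (O : T), B (fun a => g a) O = ∑ a ∈ O.1, g a := by
    intro g O
    exact Finset.sum_attach O.1 g
  have hBsurj : Function.Surjective B := by
    intro k
    choose rep hrep using fun O : T => hne O.1 O.2
    have hinj : Function.Injective rep := by
      intro O O' h
      exact Subtype.ext (disj _ O.2 _ O'.2 _ (hrep O) (h ▸ hrep O'))
    refine ⟨fun a => Function.extend rep k 0 a, ?_⟩
    funext O
    rw [hBd, Finset.sum_eq_single (rep O)]
    · exact hinj.extend_apply _ _ _
    · intro b hb hn
      rw [Function.extend_apply']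
      · rfl
      · rintro ⟨O', rfl⟩
        exact hn (by rw [Subtype.ext (disj _ O.2 _ O'.2 _ hb (hrep O'))])
    · intro h; exact absurd (hrep O) h
  have hle : LinearMap.range d ≤ LinearMap.ker B := by
    rintro _ ⟨f, rfl⟩
    rw [LinearMap.mem_ker]
    funext O
    have := hz (fun v => if h : v ∈ V then f ⟨v, h⟩ else 0) O O.2
    rw [← hBd] at this
    rw [Pi.zero_apply, ← this]
    refine congrFun (congrArg B ?_) O
    funext a
    have := mem a a.2
    simp [d, this.1, this.2]
  have hkd : Module.finrank (ZMod 2) (LinearMap.ker d) ≤ 1 := by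
    apply finrank_le_one_iff.2
    obtain ⟨v0, hv0⟩ := hV
    have hone : (fun _ => 1 : V → ZMod 2) ∈ LinearMap.ker d := by
      rw [LinearMap.mem_ker]; funext a; simp only [d, LinearMap.coe_mk, AddHom.coe_mk]; exact z2two
    refine ⟨⟨_, hone⟩, ?_⟩
    rintro ⟨f, hf⟩
    refine ⟨f ⟨v0, hv0⟩, ?_⟩
    apply Subtype.ext
    funext ⟨v, hv⟩
    simp only [SetLike.mk_smul_mk, Pi.smul_apply, smul_eq_mul, mul_one]
    rw [LinearMap.mem_ker] at hf
    have := conn (fun v => ∃ h : v ∈ V, f ⟨v, h⟩ = f ⟨v0, hv0⟩) (by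
      intro a ha
      have h1 := congrFun hf ⟨a, ha⟩
      simp only [d, LinearMap.coe_mk, AddHom.coe_mk, Pi.zero_apply] at h1
      have h2 : f ⟨src a, (mem a ha).1⟩ = f ⟨tgt a, (mem a ha).2⟩ := by
        exact z2eq _ _ h1
      constructor
      · rintro ⟨_, h⟩; exact ⟨(mem a ha).2, h2 ▸ h⟩
      · rintro ⟨_, h⟩; exact ⟨(mem a ha).1, h2 ▸ h⟩) v0 hv0 v hv ⟨hv0, rfl⟩
    exact this.2.symm
  have r1 := LinearMap.finrank_range_add_finrank_ker d
  have r2 := LinearMap.finrank_range_add_finrank_ker B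
  rw [LinearMap.range_eq_top.2 hBsurj] at r2
  simp only [finrank_top, Module.finrank_fintype_fun_eq_card, Fintype.card_coe] at r1 r2
  have heq := Submodule.eq_of_le_of_finrank_le hle (by omega)
  have hgk : (fun a : A => g a) ∈ LinearMap.ker B := by
    rw [LinearMap.mem_ker]; funext O; rw [hBd]; exact hg O O.2
  rw [← heq] at hgk
  obtain ⟨f, hf⟩ := hgk
  refine ⟨fun v => if h : v ∈ V then f ⟨v, h⟩ else 0, ?_⟩
  intro a ha
  have h1 := congrFun hf ⟨a, ha⟩
  have := mem a ha
  simpa [d, this.1, this.2] using h1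
end

section
variable {Q : QuivRel} (st : SigmaTau Q)

theorem tri_ind {a b c : ℕ} (hT : Tri Q a b c)
    (hs : ∀ a b c, (a, b) ∈ Q.rel → (a, c) ∈ Q.rel → b = c)
    (hp : ∀ a b c, (b, a) ∈ Q.rel → (c, a) ∈ Q.rel → b = c) (a' b' c' : ℕ)
    (hT' : Tri Q a' b' c') : (if a' = a ∨ a' = b then (1 : ZMod 2) else 0) +
      (if b' = a ∨ b' = b then (1 : ZMod 2) else 0) +
      (if c' = a ∨ c' = b then (1 : ZMod 2) else 0) = 0 := by
  have key : ∀ x y z, Tri Q x y z → x = a → y = b ∧ z = c := by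
    intro x y z h1 h2
    subst h2
    exact ⟨hs _ _ _ h1.2.2.2.1 hT.2.2.2.1, hp _ _ _ h1.2.2.2.2.2 hT.2.2.2.2.2⟩
  have key2 : ∀ x y z, Tri Q x y z → x = b → y = c ∧ z = a := by
    intro x y z h1 h2
    subst h2
    exact ⟨hs _ _ _ h1.2.2.2.1 hT.rot.2.2.2.1, hp _ _ _ h1.2.2.2.2.2 hT.rot.2.2.2.2.2⟩
  have k1 := key _ _ _ hT'
  have k2 := key _ _ _ hT'.rot
  have k3 := key _ _ _ hT'.rot.rot
  have l1 := key2 _ _ _ hT'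
  have l2 := key2 _ _ _ hT'.rot
  have l3 := key2 _ _ _ hT'.rot.rot
  have d1 := hT.1
  have d2 := hT.2.1
  have d3 := hT.2.2.1
  set g : ℕ → ZMod 2 := fun x => if x = a ∨ x = b then 1 else 0 with hg
  have ga : g a = 1 := by simp [hg]
  have gb : g b = 1 := by simp [hg]
  have gc : g c = 0 := by simp [hg, d2.symm, d3.symm]
  have gz : ∀ x, x ≠ a → x ≠ b → g x = 0 := by intro x h1 h2; simp [hg, h1, h2]
  change g a' + g b' + g c' = 0
  by_cases e1 : a' = a
  · obtain ⟨h1, h2⟩ := k1 e1; rw [e1, h1, h2, ga, gb, gc]; decide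
  by_cases e2 : b' = a
  · obtain ⟨h1, h2⟩ := k2 e2; rw [e2, h1, h2, ga, gb, gc]; decide
  by_cases e3 : c' = a
  · obtain ⟨h1, h2⟩ := k3 e3; rw [e3, h1, h2, ga, gb, gc]; decide
  by_cases f1 : a' = b
  · exact absurd (l1 f1).2 e3
  by_cases f2 : b' = b
  · exact absurd (l2 f2).2 e1
  by_cases f3 : c' = b
  · exact absurd (l3 f3).2 e2
  rw [gz _ e1 f1, gz _ e2 f2, gz _ e3 f3]; decide

/-- There is no cyclic path without relations: such a path would be a sum of triangles modulo 2,
hence would exhaust all half-vertices. -/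
theorem no_perm_cycle {s t : ℕ → Bool}
    (conn : ∀ X : ℕ → Prop, (∀ a ∈ Q.A, (X (Q.src a) ↔ X (Q.tgt a))) →
      ∀ x ∈ Q.V, ∀ y ∈ Q.V, X x → X y)
    (mem : ∀ a ∈ Q.A, Q.src a ∈ Q.V ∧ Q.tgt a ∈ Q.V)
    (rel : ∀ a b, (a, b) ∈ Q.rel ↔ a ∈ Q.A ∧ b ∈ Q.A ∧ Q.src a = Q.tgt b ∧ s a = t b)
    (si : ∀ a ∈ Q.A, ∀ b ∈ Q.A, Q.src a = Q.src b → s a = s b → a = b)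
    (ti : ∀ a ∈ Q.A, ∀ b ∈ Q.A, Q.tgt a = Q.tgt b → t a = t b → a = b)
    (h1 : ∀ g : ℕ → ZMod 2, (∀ a b c, Tri Q a b c → g a + g b + g c = 0) →
      ∃ f : ℕ → ZMod 2, ∀ a ∈ Q.A, f (Q.src a) + f (Q.tgt a) = g a)
    {v : ℕ} (hv : v ∈ Q.V) {β : Bool} (hβ : ∀ a ∈ Q.A, Q.src a = v → s a ≠ β)
    (S : Finset ℕ) (hS : S ⊆ Q.A) (hne : S.Nonempty)
    (hsucc : ∀ a ∈ S, ∃ b ∈ S, Q.src a = Q.tgt b ∧ s a ≠ t b) : False := by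
  classical
  have hs : ∀ a b c, (a, b) ∈ Q.rel → (a, c) ∈ Q.rel → b = c := by
    intro a b c h1 h2
    have h1 := (rel _ _).1 h1
    have h2 := (rel _ _).1 h2
    exact ti _ h1.2.1 _ h2.2.1 (by grind) (by grind)
  have hp : ∀ a b c, (b, a) ∈ Q.rel → (c, a) ∈ Q.rel → b = c := by
    intro a b c h1 h2
    have h1 := (rel _ _).1 h1
    have h2 := (rel _ _).1 h2
    exact si _ h1.1 _ h2.1 (by grind) (by grind)
  choose! φ hφ using hsucc
  have hinj : Set.InjOn φ S := by
    intro a ha b hb hab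
    have h1 := (hφ a ha).2
    have h2 := (hφ b hb).2
    rw [← hab] at h2
    exact si a (hS ha) b (hS hb) (h1.1.trans h2.1.symm) (bool3 _ _ _ h1.2 h2.2)
  have hmaps : Set.MapsTo φ S S := fun a ha => (hφ a ha).1
  have hcyc : ∀ g : ℕ → ZMod 2, (∀ a b c, Tri Q a b c → g a + g b + g c = 0) →
      ∑ a ∈ S, g a = 0 := by
    intro g hg
    obtain ⟨f, hf⟩ := h1 g hg
    have e1 : ∑ a ∈ S, f (Q.src a) = ∑ a ∈ S, f (Q.tgt a) := by
      refine Finset.sum_nbij φ hmaps hinj ?_ ?_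
      · exact (Finset.surjOn_of_injOn_of_card_le φ hmaps hinj le_rfl)
      · intro a ha; rw [(hφ a ha).2.1]
    rw [← Finset.sum_congr rfl (fun a ha => hf a (hS ha)), Finset.sum_add_distrib, e1]
    exact CharTwo.add_self_eq_zero _
  have htri : ∀ a ∈ S, ∃ b c, Tri Q a b c := by
    intro a ha
    by_contra hn
    have := hcyc (fun x => if x = a then 1 else 0) (by
      intro a' b' c' hT
      have q1 : a' ≠ a := by rintro rfl; exact hn ⟨_, _, hT⟩
      have q2 : b' ≠ a := by rintro rfl; exact hn ⟨_, _, hT.rot⟩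
      have q3 : c' ≠ a := by rintro rfl; exact hn ⟨_, _, hT.rot.rot⟩
      simp [q1, q2, q3])
    rw [Finset.sum_ite_eq' S a, if_pos ha] at this
    exact one_ne_zero this
  have hclosed : ∀ a b c, Tri Q a b c → a ∈ S → b ∈ S := by
    intro a b c hT ha
    by_contra hb
    have := hcyc (fun x => if x = a ∨ x = b then 1 else 0) (tri_ind hT hs hp)
    rw [Finset.sum_eq_single a] at this
    · simp at this
    · intro x hx hxa
      rw [if_neg]
      rintro (h | h)
      · exact hxa h
      · exact hb (h ▸ hx)
    · intro h; exact absurd ha h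
  have rs : ∀ a ∈ S, ∃ b ∈ S, (a, b) ∈ Q.rel := by
    intro a ha
    obtain ⟨b, c, hT⟩ := htri a ha
    exact ⟨b, hclosed _ _ _ hT ha, hT.2.2.2.1⟩
  have rp : ∀ a ∈ S, ∃ b ∈ S, (b, a) ∈ Q.rel := by
    intro a ha
    obtain ⟨b, c, hT⟩ := htri a ha
    exact ⟨c, hclosed _ _ _ hT.rot (hclosed _ _ _ hT ha), hT.2.2.2.2.2⟩
  -- all four halves at a vertex met by `S` are occupied by `S`
  have full : ∀ a ∈ S, ∀ ε : Bool, (∃ b ∈ S, Q.src b = Q.src a ∧ s b = ε) ∧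
      (∃ b ∈ S, Q.tgt b = Q.src a ∧ t b = ε) := by
    intro a ha ε
    obtain ⟨c, hc, hac⟩ := rs a ha
    obtain ⟨hpS, hp1, hp2⟩ := hφ a ha
    obtain ⟨q, hq, hqp⟩ := rp _ hpS
    have r1 := (rel _ _).1 hac
    have r2 := (rel _ _).1 hqp
    by_cases hε : s a = ε
    · exact ⟨⟨a, ha, rfl, hε⟩, ⟨c, hc, r1.2.2.1.symm, by rw [← r1.2.2.2, hε]⟩⟩
    · have e : t (φ a) = ε := bool3 _ _ (s a) (Ne.symm hp2) (Ne.symm hε)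
      exact ⟨⟨q, hq, by rw [r2.2.2.1, hp1], by rw [r2.2.2.2, e]⟩, ⟨φ a, hpS, hp1.symm, e⟩⟩
  obtain ⟨a0, ha0⟩ := hne
  have := conn (fun v => ∃ a ∈ S, Q.src a = v) (by
    intro e he
    constructor
    · rintro ⟨a, ha, hae⟩
      obtain ⟨b, hb, h2, h3⟩ := (full a ha (s e)).1
      obtain rfl := si b (hS hb) e he (h2.trans hae) h3
      obtain ⟨q, hq, hqe⟩ := rp b hb
      exact ⟨q, hq, ((rel _ _).1 hqe).2.2.1⟩
    · rintro ⟨a, ha, hae⟩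
      obtain ⟨b, hb, h2, h3⟩ := (full a ha (t e)).2
      obtain rfl := ti b (hS hb) e he (h2.trans hae) h3
      exact ⟨b, hb, rfl⟩) _ (mem a0 (hS ha0)).1 v hv ⟨a0, ha0, rfl⟩
  obtain ⟨a, ha, hav⟩ := this
  obtain ⟨b, hb, h2, h3⟩ := (full a ha β).1
  exact hβ b (hS hb) (h2.trans hav) h3

theorem rank_of_no_cycle (A : Finset ℕ) (P : ℕ → ℕ → Prop)
    (h : ∀ S : Finset ℕ, S ⊆ A → S.Nonempty → (∀ a ∈ S, ∃ b ∈ S, P a b) → False) :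
    ∃ r : ℕ → ℕ, ∀ a ∈ A, ∀ b ∈ A, P a b → r b < r a := by
  classical
  let R : ℕ → ℕ → Prop := fun b a => a ∈ A ∧ b ∈ A ∧ P a b
  have wf : WellFounded R := by
    rw [WellFounded.wellFounded_iff_has_min]
    intro S hS
    by_contra hn
    push Not at hn
    have hSA : S ⊆ (A : Set ℕ) := fun a ha => (hn a ha).choose_spec.2.1
    have hfin : S.Finite := A.finite_toSet.subset hSA
    refine h hfin.toFinset (by simpa using hSA) (by simpa using hS) ?_
    intro a ha
    obtain ⟨b, hb, hab⟩ := hn a (by simpa using ha)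
    exact ⟨b, by simpa using hb, hab.2.2⟩
  refine ⟨fun a => (A.filter (fun b => Relation.TransGen R b a)).card, ?_⟩
  intro a ha b hb hab
  have hR : R b a := ⟨ha, hb, hab⟩
  apply Finset.card_lt_card
  rw [Finset.ssubset_iff_of_subset]
  · refine ⟨b, by simpa using ⟨hb, .single hR⟩, ?_⟩
    intro h'
    rw [Finset.mem_filter] at h'
    exact wf.transGen.irrefl.irrefl b h'.2
  · intro x hx
    rw [Finset.mem_filter] at hx ⊢
    exact ⟨hx.1, hx.2.tail hR⟩

theorem orbits_count {m p : ℕ} (hG : IsGentle Q)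
    (hf : ∀ x, fInv Q st x = m * charFn 0 3 x + charFn (p + m + 2) p x) :
    {w | InN Q st w}.ncard = p + m + 2 ∧ (∑ᶠ w ∈ {w | InN Q st w}, Thread.len w) = p ∧
    (∀ O, COrbit Q st O → O.ncard = 3) ∧ {O | COrbit Q st O}.ncard = m := by
  have hN := inN_finite st hG
  have hNO : ∀ X : Set Thread → Prop, {O : Set Thread | NOrbit Q st O ∧ X O}.Finite := fun X =>
    (hN.powerset).subset (fun O hO => hO.1.sub st)
  have hCfin : {a | InC Q st a}.Finite := Q.A.finite_toSet.subset (fun a ha => ha.1)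
  have hCO : ∀ X : Set ℕ → Prop, {O : Set ℕ | COrbit Q st O ∧ X O}.Finite := fun X =>
    (hCfin.powerset).subset (fun O hO => hO.1.sub st)
  have hpos : ∀ O, NOrbit Q st O → 0 < pN O := by
    intro O hO
    have := hO.sub st
    obtain ⟨w, hw, rfl⟩ := hO
    exact (Set.ncard_pos (hN.subset this)).2 ⟨w, .refl _⟩
  have f1 := hf (p + m + 2, p)
  have c1 : charFn 0 3 (p + m + 2, p) = 0 := by
    unfold charFn; rw [if_neg]; intro h; simp at h
  have c2 : charFn (p + m + 2) p (p + m + 2, p) = 1 := by simp [charFn]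
  have e1 : {O : Set ℕ | COrbit Q st O ∧ p + m + 2 = 0 ∧ O.ncard = p} = ∅ := by
    ext O; simp
  simp only [fInv] at f1
  rw [c1, c2, e1, Set.ncard_empty] at f1
  simp only [add_zero, mul_zero, zero_add] at f1
  obtain ⟨O, hO⟩ := Set.ncard_eq_one.1 f1
  have hOm : O ∈ {O | NOrbit Q st O ∧ pN O = p + m + 2 ∧ qN O = p} := by rw [hO]; rfl
  have all : {w | InN Q st w} = O := by
    apply Set.Subset.antisymm _ (hOm.1.sub st)
    intro w hw
    set O' := {w' | Relation.EqvGen (PhiRel Q st) w w'} with hO'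
    have ho : NOrbit Q st O' := ⟨w, hw, rfl⟩
    have hp := hpos _ ho
    have f2 := hf (pN O', qN O')
    have : 0 < {O : Set Thread | NOrbit Q st O ∧ pN O = pN O' ∧ qN O = qN O'}.ncard :=
      (Set.ncard_pos (hNO _)).2 ⟨O', ho, rfl, rfl⟩
    have c3 : charFn 0 3 (pN O', qN O') = 0 := by
      unfold charFn; rw [if_neg]; intro h; simp at h; omega
    have c4 : charFn (p + m + 2) p (pN O', qN O') ≠ 0 := by
      intro h
      simp only [fInv] at f2
      rw [h, c3] at f2
      omega
    have c5 : (pN O', qN O') = (p + m + 2, p) := by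
      by_contra h; exact c4 (by unfold charFn; rw [if_neg h])
    simp only [Prod.mk.injEq] at c5
    have : O' ∈ {O | NOrbit Q st O ∧ pN O = p + m + 2 ∧ qN O = p} := ⟨ho, c5⟩
    rw [hO] at this
    rw [← Set.mem_singleton_iff.1 this]
    exact .refl _
  have f3 : ∀ q, {O : Set ℕ | COrbit Q st O ∧ O.ncard = q}.ncard = if q = 3 then m else 0 := by
    intro q
    have f4 := hf (0, q)
    have e2 : {O : Set Thread | NOrbit Q st O ∧ pN O = 0 ∧ qN O = q} = ∅ := by
      ext O
      simp only [Set.mem_ofPred_eq, Set.mem_empty_iff_false, iff_false]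
      rintro ⟨h1, h2, -⟩
      have := hpos O h1
      omega
    simp only [fInv] at f4
    rw [e2, Set.ncard_empty] at f4
    simp only [true_and, zero_add] at f4
    rw [f4]
    simp only [charFn, Prod.mk.injEq, true_and]
    rw [if_neg (c := 0 = p + m + 2 ∧ q = p) (by omega)]
    split_ifs <;> simp
  have h3 : ∀ O, COrbit Q st O → O.ncard = 3 := by
    intro O hO
    have : 0 < {O' : Set ℕ | COrbit Q st O' ∧ O'.ncard = O.ncard}.ncard :=
      (Set.ncard_pos (hCO _)).2 ⟨O, hO, rfl⟩
    rw [f3] at this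
    by_contra h
    rw [if_neg h] at this
    omega
  refine ⟨all ▸ hOm.2.1, all ▸ hOm.2.2, h3, ?_⟩
  have := f3 3
  rw [if_pos rfl] at this
  rw [← this]
  congr 1
  ext O
  exact ⟨fun h => ⟨h, h3 O h⟩, fun h => h.1⟩

/-- the arrows of a thread -/
def Thread.arr : Thread → Finset ℕ
  | .triv _ _ => ∅
  | .arrows l => l.toFinset

theorem Thread.arr_card (w : Thread) : w.arr.card ≤ w.len := by
  cases w with
  | triv x ε => simp [Thread.arr]
  | arrows l => exact List.toFinset_card_le l

theorem good_of_classA (hA : ClassA Q st) : ∃ s t, Good Q s t := by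
  classical
  obtain ⟨hG, m, p, hf⟩ := hA
  obtain ⟨k1, k2, k3, k4⟩ := orbits_count st hG hf
  have hN := inN_finite st hG
  have hconn := (connected_iff Q hG.2.1).1 hG.2.2.1
  let T : Finset (Finset ℕ) := Q.A.powerset.filter (fun O => COrbit Q st (O : Set ℕ))
  have hT : ∀ O, O ∈ T ↔ COrbit Q st (O : Set ℕ) := by
    intro O
    simp only [T, Finset.mem_filter, Finset.mem_powerset, and_iff_right_iff_imp]
    intro h x hx
    exact (h.sub st hx).1
  have hTimg : ((fun O : Finset ℕ => (O : Set ℕ)) '' (T : Set (Finset ℕ))) = {O | COrbit Q st O} := by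
    ext O
    simp only [Set.mem_image, Finset.mem_coe, hT, Set.mem_ofPred_eq]
    constructor
    · rintro ⟨O', h, rfl⟩; exact h
    · intro h
      have hfin : O.Finite := Q.A.finite_toSet.subset (fun a ha => (h.sub st ha).1)
      exact ⟨hfin.toFinset, by simpa using h, by simp⟩
  have hTc : T.card = m := by
    rw [← k4, ← hTimg, Set.ncard_image_of_injective _ Finset.coe_injective, Set.ncard_coe_finset]
  have hO3 : ∀ O ∈ T, O.card = 3 := by
    intro O hO
    rw [← Set.ncard_coe_finset]
    exact k3 _ ((hT O).1 hO)
  have htri : ∀ O ∈ T, ∃ x y z, Tri Q x y z ∧ O = {x, y, z} := by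
    intro O hO
    obtain ⟨x, y, z, h1, h2⟩ := COrbit.tri st hG ((hT O).1 hO) (k3 _ ((hT O).1 hO))
    exact ⟨x, y, z, h1, Finset.coe_injective h2⟩
  have hsum : ∀ (g : ℕ → ZMod 2) x y z, Tri Q x y z →
      ∑ a ∈ ({x, y, z} : Finset ℕ), g a = g x + g y + g z := by
    intro g x y z h
    rw [Finset.sum_insert (by simp [h.1, h.2.2.1]), Finset.sum_insert (by simp [h.2.1]),
      Finset.sum_singleton]
    ring
  have hAcard : Q.A.card ≤ p + 3 * m := by
    have hcov : Q.A ⊆ hN.toFinset.biUnion Thread.arr ∪ T.biUnion id := by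
      intro a ha
      rw [Finset.mem_union]
      by_cases hc : InC Q st a
      · right
        have ho : COrbit Q st {b | Relation.EqvGen (PsiRel Q st) a b} := ⟨a, hc, rfl⟩
        have : {b | Relation.EqvGen (PsiRel Q st) a b} ∈ {O | COrbit Q st O} := ho
        rw [← hTimg] at this
        obtain ⟨O, hO, he⟩ := this
        rw [Finset.mem_biUnion]
        refine ⟨O, hO, ?_⟩
        have : a ∈ (O : Set ℕ) := by
          simp only at he
          rw [he]; exact .refl _
        simpa using this
      · left
        have : ∃ l : List ℕ, InN Q st (.arrows l) ∧ a ∈ l := by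
          by_contra h; exact hc ⟨ha, h⟩
        obtain ⟨l, hl, hal⟩ := this
        rw [Finset.mem_biUnion]
        exact ⟨.arrows l, by simpa using hl, by simpa [Thread.arr] using hal⟩
    have h1 := (Finset.card_le_card hcov).trans (Finset.card_union_le _ _)
    have h2 : (hN.toFinset.biUnion Thread.arr).card ≤ p := by
      refine Finset.card_biUnion_le.trans ?_
      refine (Finset.sum_le_sum (fun w _ => w.arr_card)).trans ?_
      rw [← k2, finsum_mem_eq_finite_toFinset_sum _ hN]
    have h3 : (T.biUnion id).card ≤ T.card * 3 :=
      Finset.card_biUnion_le_card_mul _ _ _ (fun O hO => (hO3 O hO).le)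
    omega
  have hle := inN_card st hG
  rw [k1] at hle
  have hdec : ∀ x y : ℤ, (x = 1 ∨ x = -1) → (y = 1 ∨ y = -1) →
      (decide (x = 1) = decide (y = 1) ↔ x = y) := by
    rintro x y (rfl | rfl) (rfl | rfl) <;> simp
  have hrel : ∀ a b, (a, b) ∈ Q.rel ↔ a ∈ Q.A ∧ b ∈ Q.A ∧ Q.src a = Q.tgt b ∧
      decide (st.σ a = 1) = decide (st.τ b = 1) := by
    intro a b
    rw [relI st hG]
    constructor
    · rintro ⟨h1, h2, h3, h4⟩
      exact ⟨h1, h2, h3, (hdec _ _ (st.σ_pm a h1) (st.τ_pm b h2)).2 h4⟩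
    · rintro ⟨h1, h2, h3, h4⟩
      exact ⟨h1, h2, h3, (hdec _ _ (st.σ_pm a h1) (st.τ_pm b h2)).1 h4⟩
  have hsi : ∀ a ∈ Q.A, ∀ b ∈ Q.A, Q.src a = Q.src b →
      decide (st.σ a = 1) = decide (st.σ b = 1) → a = b := by
    intro a ha b hb h1 h2
    exact sI st ha hb h1 ((hdec _ _ (st.σ_pm a ha) (st.σ_pm b hb)).1 h2)
  have hti : ∀ a ∈ Q.A, ∀ b ∈ Q.A, Q.tgt a = Q.tgt b →
      decide (st.τ a = 1) = decide (st.τ b = 1) → a = b := by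
    intro a ha b hb h1 h2
    exact tI st ha hb h1 ((hdec _ _ (st.τ_pm a ha) (st.τ_pm b hb)).1 h2)
  have hh1 : ∀ g : ℕ → ZMod 2, (∀ a b c, Tri Q a b c → g a + g b + g c = 0) →
      ∃ f : ℕ → ZMod 2, ∀ a ∈ Q.A, f (Q.src a) + f (Q.tgt a) = g a := by
    intro g hg
    refine h1_abs Q.V Q.A Q.src Q.tgt hG.1 hG.2.1 hconn T ?_ ?_ ?_ ?_ ?_ g ?_
    · intro O hO; exact Finset.mem_powerset.1 (Finset.mem_filter.1 hO).1
    · intro O hO; rw [← Finset.card_pos, hO3 O hO]; omega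
    · intro O hO O' hO' a h1 h2
      exact Finset.coe_injective (COrbit.disj st ((hT O).1 hO) ((hT O').1 hO') h1 h2)
    · omega
    · intro f O hO
      obtain ⟨x, y, z, h1, rfl⟩ := htri O hO
      rw [hsum _ x y z h1]
      rw [((hrel _ _).1 h1.2.2.2.1).2.2.1, ((hrel _ _).1 h1.2.2.2.2.1).2.2.1,
        ((hrel _ _).1 h1.2.2.2.2.2).2.2.1]
      have : ∀ x y z : ZMod 2, y + x + (z + y) + (x + z) = 0 := by decide +revert
      exact this _ _ _
    · intro O hO
      obtain ⟨x, y, z, h1, rfl⟩ := htri O hO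
      rw [hsum _ x y z h1]
      exact hg x y z h1
  obtain ⟨w, hw⟩ : {w | InN Q st w}.Nonempty := by
    rw [← Set.ncard_pos hN, k1]; omega
  have hw1 := inN_maps st hG w hw
  simp only [Finset.mem_sdiff, Finset.mem_product, Finset.mem_insert, Finset.mem_singleton] at hw1
  obtain ⟨r, hr⟩ := rank_of_no_cycle Q.A
    (fun a b => Q.src a = Q.tgt b ∧ decide (st.σ a = 1) ≠ decide (st.τ b = 1))
    (fun S hS hne hsucc => no_perm_cycle (s := fun a => decide (st.σ a = 1))
      (t := fun a => decide (st.τ a = 1)) hconn hG.2.1 hrel hsi hti hh1 hw1.1.1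
      (β := decide (w.tauAnti st = 1)) (by
        intro a ha h1 h2
        exact hw.2.1 ⟨a, ha, h1, (hdec _ _ (st.σ_pm a ha) hw1.1.2).1 h2⟩) S hS hne hsucc)
  exact ⟨fun a => decide (st.σ a = 1), fun a => decide (st.τ a = 1),
    hG.1, hG.2.1, hconn, hrel, hsi, hti, ⟨r, fun a ha b hb h1 h2 => hr a ha b hb ⟨h1, h2⟩⟩, hh1⟩
end

/-- Every `𝚫 ∈ 𝒜` is reflection-equivalent to a gentle
quiver without branch relations. -/
theorem stmt12 (Q : QuivRel) (st : SigmaTau Q) (hA : ClassA Q st) :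
    ∃ Q' : QuivRel, IsGentle Q' ∧ (∀ ρ : ℕ × ℕ, ¬ BranchRel Q' ρ) ∧
      RefEquiv Q Q' := by
  obtain ⟨s, t, h⟩ := good_of_classA st hA
  exact final_of_good h

end GentleQuiv
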